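/- Let (ρ, u, B) be a smooth solution of the isentropic compressible MHD system with Navier-slip boundary conditions on Ω, and set u̇ = u_t + u·∇u. Then for every p ∈ [1,∞) there is a constant C depending only on p and Ω such that: (i) ‖u̇‖_{L^p} ≤ C(‖∇u̇‖_{L²} + ‖∇u‖²_{L²}); and (ii) ‖∇u̇‖_{L²} ≤ C(‖div u̇‖_{L²} + ‖curl u̇‖_{L²} + ‖∇u‖²_{L⁴}). -/

import Mathlib

noncomputable section

open MeasureTheory Real Set Filter Topology Bornology

/-- Points of the plane (with an equivalent norm to the Euclidean one). -/
abbrev V2 := Fin 2 → ℝ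

namespace MHD

/-- `i`-th partial derivative of a scalar field. -/
def pd (i : Fin 2) (f : V2 → ℝ) (x : V2) : ℝ :=
  fderiv ℝ f x (Pi.single i 1)

/-- Gradient of a scalar field. -/
def grad (f : V2 → ℝ) (x : V2) : V2 := fun i => pd i f x

/-- Divergence of a planar vector field. -/
def div2 (u : V2 → V2) (x : V2) : ℝ := ∑ i, pd i (fun y => u y i) x

/-- (Scalar) curl of a planar vector field. -/
def curl2 (u : V2 → V2) (x : V2) : ℝ :=
  pd 0 (fun y => u y 1) x - pd 1 (fun y => u y 0) x

/-- Laplacian of a scalar field. -/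
def lap (f : V2 → ℝ) (x : V2) : ℝ := ∑ j, pd j (pd j f) x

/-- Euclidean inner product on the plane. -/
def dot (a b : V2) : ℝ := ∑ i, a i * b i

/-- Squared Euclidean norm on the plane. -/
def nsq (a : V2) : ℝ := ∑ i, (a i) ^ 2

/-- Rotation by -90 degrees : `perp (n¹,n²) = (n²,−n¹)`. -/
def perp (v : V2) : V2 := ![v 1, -(v 0)]

/-- Squared Frobenius norm of the spatial gradient of a vector field. -/
def gnsq (u : V2 → V2) (x : V2) : ℝ := ∑ i, ∑ j, (pd j (fun y => u y i) x) ^ 2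

/-- Squared Frobenius norm of the second spatial gradient of a vector field. -/
def g2nsq (u : V2 → V2) (x : V2) : ℝ :=
  ∑ i, ∑ j, ∑ k, (pd k (fun y => pd j (fun z => u z i) y) x) ^ 2

/-- `Lᵖ(Ω)` norm of a scalar field. -/
def LpS (p : ℝ) (Ω : Set V2) (f : V2 → ℝ) : ℝ :=
  (∫ x in Ω, |f x| ^ p) ^ (1 / p)

/-- `Lᵖ(Ω)` norm of a vector field (Euclidean norm pointwise). -/
def LpV (p : ℝ) (Ω : Set V2) (u : V2 → V2) : ℝ :=
  (∫ x in Ω, (nsq (u x)) ^ (p / 2)) ^ (1 / p)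

/-- `Lᵖ(Ω)` norm of the gradient of a vector field. -/
def LpG (p : ℝ) (Ω : Set V2) (u : V2 → V2) : ℝ :=
  (∫ x in Ω, (gnsq u x) ^ (p / 2)) ^ (1 / p)

/-- `Lᵖ(Ω)` norm of the second gradient of a vector field. -/
def LpG2 (p : ℝ) (Ω : Set V2) (u : V2 → V2) : ℝ :=
  (∫ x in Ω, (g2nsq u x) ^ (p / 2)) ^ (1 / p)

/-- Average of a scalar field over `Ω`. -/
def avg (Ω : Set V2) (f : V2 → ℝ) : ℝ := (∫ x in Ω, f x) / (volume Ω).toReal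

/-- Time derivative of a time dependent scalar field. -/
def dt (f : ℝ → V2 → ℝ) (t : ℝ) (x : V2) : ℝ := deriv (fun s => f s x) t

/-- Time derivative of a time dependent vector field. -/
def dtV (u : ℝ → V2 → V2) (t : ℝ) (x : V2) : V2 := fun i => dt (fun s y => u s y i) t x

/-- Material derivative `u̇ = u_t + (u·∇)u` of the velocity field itself. -/
def matD (u : ℝ → V2 → V2) (t : ℝ) (x : V2) : V2 := fun i =>
  dt (fun s y => u s y i) t x + dot (u t x) (grad (fun y => u t y i) x)

/-- The material derivative `(div u)· = (div u)_t + u·∇ div u`. -/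
def divdot (u : ℝ → V2 → V2) (t : ℝ) (x : V2) : ℝ :=
  deriv (fun s => div2 (u s) x) t + dot (u t x) (grad (fun y => div2 (u t) y) x)

/-- Average pressure `P̄` at time `t`. -/
def Pbar (Ω : Set V2) (a γ : ℝ) (ρ : ℝ → V2 → ℝ) (t : ℝ) : ℝ :=
  avg Ω (fun x => a * ρ t x ^ γ)

/-- Effective viscous flux `F = (2μ+λ) div u − (P − P̄) − |B|²/2`. -/
def Fflux (Ω : Set V2) (a γ μ lam : ℝ) (ρ : ℝ → V2 → ℝ) (u B : ℝ → V2 → V2)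
    (t : ℝ) (x : V2) : ℝ :=
  (2 * μ + lam) * div2 (u t) x - (a * ρ t x ^ γ - Pbar Ω a γ ρ t) - nsq (B t x) / 2

/-- Potential energy density `G(ρ)`. -/
def Gpot (a γ ρb : ℝ) (r : ℝ) : ℝ :=
  r * ∫ ξ in ρb..r, (a * ξ ^ γ - a * ρb ^ γ) / ξ ^ 2

/-- Initial total energy `C₀`. -/
def C0 (Ω : Set V2) (a γ : ℝ) (ρ₀ : V2 → ℝ) (u₀ B₀ : V2 → V2) : ℝ :=
  ∫ x in Ω, (ρ₀ x * nsq (u₀ x) / 2 + nsq (B₀ x) / 2 + Gpot a γ (avg Ω ρ₀) (ρ₀ x))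

/-- The time weight `σ(t) = min{1,t}`. -/
def tw (t : ℝ) : ℝ := min 1 t

/-- Smoothness (in time and space) of a time dependent scalar field. -/
def Smooth2 (f : ℝ → V2 → ℝ) : Prop := ContDiff ℝ (⊤ : ℕ∞) (fun p : ℝ × V2 => f p.1 p.2)

/-- Smoothness (in time and space) of a time dependent vector field. -/
def Smooth2V (u : ℝ → V2 → V2) : Prop := ∀ i, Smooth2 (fun t x => u t x i)

/-- A bounded domain with smooth boundary, given by a smooth defining function `φ`,
with outward unit normal `n` on the boundary. -/
structure SmoothDomain (Ω : Set V2) (n : V2 → V2) : Prop where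
  nonempty : Ω.Nonempty
  bounded : IsBounded Ω
  defining : ∃ φ : V2 → ℝ, ContDiff ℝ (⊤ : ℕ∞) φ ∧ Ω = {x | φ x < 0} ∧
      frontier Ω = {x | φ x = 0} ∧
      (∀ x ∈ frontier Ω, grad φ x ≠ 0) ∧
      (∀ x ∈ frontier Ω, n x = (Real.sqrt (nsq (grad φ x)))⁻¹ • grad φ x)

/-- Outward unit normal on the boundary of a convex domain, characterized by the
supporting hyperplane property. -/
def ConvexOuterNormal (Ω : Set V2) (n : V2 → V2) : Prop :=
  ∀ x ∈ frontier Ω, nsq (n x) = 1 ∧ ∀ y ∈ closure Ω, dot (n x) (y - x) ≤ 0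

/-- Membership in `H¹(Ω)` for (a smooth representative of) a vector field. -/
def InH1V (Ω : Set V2) (f : V2 → V2) : Prop :=
  (∀ i, Differentiable ℝ fun x => f x i) ∧
  IntegrableOn (fun x => nsq (f x)) Ω volume ∧ IntegrableOn (fun x => gnsq f x) Ω volume

/-- Classical (pointwise) solution of the isentropic compressible MHD system with
Navier-slip boundary conditions, for times in the set `I`. -/
structure IsMHDSol (Ω : Set V2) (n : V2 → V2) (a γ μ lam ν : ℝ) (I : Set ℝ)
    (ρ : ℝ → V2 → ℝ) (u B : ℝ → V2 → V2) : Prop where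
  mass : ∀ t ∈ I, ∀ x ∈ Ω,
    dt ρ t x + div2 (fun y j => ρ t y * u t y j) x = 0
  momentum : ∀ t ∈ I, ∀ x ∈ Ω, ∀ i,
    dt (fun s y => ρ s y * u s y i) t x
      + (∑ j, pd j (fun y => ρ t y * u t y i * u t y j) x)
      + pd i (fun y => a * ρ t y ^ γ) x
    = μ * lap (fun y => u t y i) x
      + (μ + lam) * pd i (fun y => div2 (u t) y) x
      + dot (B t x) (grad (fun y => B t y i) x)
      - pd i (fun y => nsq (B t y)) x / 2
  magnetic : ∀ t ∈ I, ∀ x ∈ Ω, ∀ i,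
    dt (fun s y => B s y i) t x + dot (u t x) (grad (fun y => B t y i) x)
      - dot (B t x) (grad (fun y => u t y i) x) + B t x i * div2 (u t) x
    = ν * lap (fun y => B t y i) x
  divB : ∀ t ∈ I, ∀ x ∈ Ω, div2 (B t) x = 0
  slipU : ∀ t ∈ I, ∀ x ∈ frontier Ω, dot (u t x) (n x) = 0 ∧ curl2 (u t) x = 0
  slipB : ∀ t ∈ I, ∀ x ∈ frontier Ω, dot (B t x) (n x) = 0 ∧ curl2 (B t) x = 0

/-!
Let `φ` be a smooth defining function of `Ω`. Since `∇φ · u = 0` on the boundary at all times,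
differentiating in time and along the tangential direction `u` gives `∇φ · u̇ = -D²φ(u, u)` there,
so `u̇` misses being tangential only by a quadratic term. The field `H = -D²φ(u, u) N`, where `N`
is a smooth extension of `∇φ / |∇φ|²` from the boundary, has the same normal component, and `H` and
`∇H` are bounded by `|u|²` and `|u|² + |∇u|²`. Hence `w = u̇ - H` is tangential.

The mean of a tangential field is controlled by its divergence (integrate `div (xᵢ w)`), so the
Poincaré–Sobolev inequality on the convex set `Ω`, obtained by averaging over homotheties, bounds
`u` by `∇u` and gives (i). By the identity
`div (w div w - (w · ∇) w) = (div w)² + (curl w)² - |∇w|²` and the divergence theorem,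
`‖div w‖² + ‖curl w‖² - ‖∇w‖²` is the boundary integral of `D²φ(w, w) / |∇φ|`, which is
nonnegative because `Ω` is convex; this gives (ii).
-/

section Segments

open AffineMap (lineMap)
open scoped ENNReal

variable {E F : Type*} [NormedAddCommGroup E] [NormedSpace ℝ E] [NormedAddCommGroup F]
  [NormedSpace ℝ F]

lemma enorm_sub_le_lintegral_fderiv_lineMap {f : E → F} (hf : ContDiff ℝ 1 f) (x y : E) :
    ‖f x - f y‖ₑ
      ≤ edist x y * ∫⁻ s in Ioc (0 : ℝ) 1, ‖fderiv ℝ f (lineMap x y s)‖ₑ := by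
  have hline : ContDiff ℝ 1 fun s : ℝ => f (lineMap x y s) :=
    hf.comp (f := fun s => lineMap x y s) (by simp only [AffineMap.lineMap_apply_module]; fun_prop)
  have hderiv : ∀ s : ℝ, deriv (fun s => f (lineMap x y s)) s
      = fderiv ℝ f (lineMap x y s) (y - x) := fun s =>
    ((hf.differentiable one_ne_zero _).hasFDerivAt.comp_hasDerivAt s
      AffineMap.hasDerivAt_lineMap).deriv
  calc ‖f x - f y‖ₑ = ‖f (lineMap x y (1 : ℝ)) - f (lineMap x y (0 : ℝ))‖ₑ := by
        rw [AffineMap.lineMap_apply_one, AffineMap.lineMap_apply_zero, enorm_sub_rev]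
    _ ≤ ∫⁻ s in Icc (0 : ℝ) 1, ‖deriv (fun s => f (lineMap x y s)) s‖ₑ :=
        enorm_sub_le_lintegral_deriv_of_contDiffOn_Icc hline.contDiffOn zero_le_one
    _ ≤ ∫⁻ s in Ioc (0 : ℝ) 1, edist x y * ‖fderiv ℝ f (lineMap x y s)‖ₑ := by
        rw [restrict_Ioc_eq_restrict_Icc]
        gcongr with s
        rw [hderiv, edist_comm, edist_eq_enorm_sub, mul_comm]
        exact ContinuousLinearMap.le_opENorm _ _
    _ = edist x y * ∫⁻ s in Ioc (0 : ℝ) 1, ‖fderiv ℝ f (lineMap x y s)‖ₑ :=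
        lintegral_const_mul' _ _ (edist_ne_top x y)

lemma enorm_sub_average_le_laverage {α : Type*} [MeasurableSpace α] [CompleteSpace F]
    {ν : Measure α} [IsFiniteMeasure ν] [NeZero ν] {f : α → F} (hf : Integrable f ν) (c : F) :
    ‖c - ⨍ y, f y ∂ν‖ₑ ≤ ⨍⁻ y, ‖c - f y‖ₑ ∂ν := by
  have hsub : c - ⨍ y, f y ∂ν = ⨍ y, (c - f y) ∂ν := by
    simp only [average_eq']
    rw [integral_sub (integrable_const c) (hf.smul_measure (by simp [NeZero.ne])),
      integral_const, probReal_univ, one_smul]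
  rw [hsub]
  exact enorm_integral_le_lintegral_enorm _

end Segments

section PoincareSobolev

open Module (finrank)
open AffineMap (lineMap)
open Function (uncurry)
open scoped ENNReal

variable {E F : Type*} [NormedAddCommGroup E] [NormedSpace ℝ E] [MeasurableSpace E] [BorelSpace E]
  [NormedAddCommGroup F] [NormedSpace ℝ F] {μ : Measure E} {Ω : Set E} {g : E → ℝ≥0∞}

/-- The integral of `g` over the homothetic copy of `Ω` of ratio `s` centred at `x`, parametrized
by `Ω`. Averaging along all the segments from `x` to `Ω` amounts to integrating this quantity
over `s ∈ (0, 1]`. -/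
def homothetyIntegral (μ : Measure E) (Ω : Set E) (g : E → ℝ≥0∞) (s : ℝ) (x : E) : ℝ≥0∞ :=
  ∫⁻ y in Ω, g (lineMap x y s) ∂μ

lemma measurable_homothetyIntegral [SecondCountableTopology E] [SFinite μ] (hg : Measurable g) :
    Measurable (uncurry (homothetyIntegral μ Ω g)) :=
  Measurable.lintegral_prod_right' (f := fun w : (ℝ × E) × E => g (lineMap w.1.2 w.2 w.1.1))
    (hg.comp (by simp only [AffineMap.lineMap_apply_module]; fun_prop))

lemma measurable_homothetyIntegral_swap [SecondCountableTopology E] [SFinite μ]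
    (hg : Measurable g) : Measurable (uncurry fun x s => homothetyIntegral μ Ω g s x) :=
  (measurable_homothetyIntegral hg).comp measurable_swap

lemma homothetyIntegral_le_rpow [IsFiniteMeasure (μ.restrict Ω)] (hg : Measurable g) {r : ℝ}
    (hr : 1 ≤ r) (s : ℝ) (x : E) :
    homothetyIntegral μ Ω g s x
      ≤ homothetyIntegral μ Ω (fun y => g y ^ r) s x ^ (1 / r) * μ Ω ^ (1 - 1 / r) := by
  have hline : Measurable fun y => g (lineMap x y s) :=
    hg.comp (by simp only [AffineMap.lineMap_apply_module]; fun_prop)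
  simpa [eLpNorm', homothetyIntegral] using
    eLpNorm'_le_eLpNorm'_mul_rpow_measure_univ one_pos hr
      (hline.aestronglyMeasurable (μ := μ.restrict Ω))

lemma homothetyIntegral_one_sub_swap [SecondCountableTopology E] [SFinite μ] (hg : Measurable g)
    (s : ℝ) :
    ∫⁻ x in Ω, homothetyIntegral μ Ω g (1 - s) x ∂μ
      = ∫⁻ x in Ω, homothetyIntegral μ Ω g s x ∂μ := by
  unfold homothetyIntegral
  rw [lintegral_lintegral_swap]
  · simp only [AffineMap.lineMap_apply_one_sub]
  · exact (hg.comp (by simp only [AffineMap.lineMap_apply_module]; fun_prop)).aemeasurable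

variable [FiniteDimensional ℝ E] [μ.IsAddHaarMeasure]

lemma homothetyIntegral_le (hΩ : MeasurableSet Ω) (hconv : Convex ℝ Ω) (g : E → ℝ≥0∞) {s : ℝ}
    (hs : s ∈ Ioc (0 : ℝ) 1) {x : E} (hx : x ∈ Ω) :
    homothetyIntegral μ Ω g s x ≤ (ENNReal.ofReal s)⁻¹ ^ finrank ℝ E * ∫⁻ y in Ω, g y ∂μ := by
  set σ := ENNReal.ofReal s
  have hσ : σ ≠ 0 := by simp [σ, hs.1]
  have himage : (fun y => lineMap x y s) '' Ω ⊆ Ω :=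
    image_subset_iff.2 fun y hy => hconv.lineMap_mem hx hy ⟨hs.1.le, hs.2⟩
  have hderiv : ∀ y ∈ Ω, HasFDerivWithinAt (fun y => lineMap x y s)
      (s • ContinuousLinearMap.id ℝ E) Ω y := fun y _ => by
    simp only [AffineMap.lineMap_apply_module]
    exact (((hasFDerivAt_id y).const_smul s).const_add ((1 - s) • x)).hasFDerivWithinAt
  have hinj : InjOn (fun y => lineMap x y s) Ω := fun y _ z _ hyz => by
    simpa [AffineMap.lineMap_apply_module, hs.1.ne'] using hyz
  have hcov := lintegral_image_eq_lintegral_abs_det_fderiv_mul μ hΩ hderiv hinj g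
  have hdet : ENNReal.ofReal |(s • ContinuousLinearMap.id ℝ E).det| = σ ^ finrank ℝ E := by
    rw [ContinuousLinearMap.det, ContinuousLinearMap.toLinearMap_smul, LinearMap.det_smul]
    simp [σ, abs_of_pos hs.1, ENNReal.ofReal_pow hs.1.le]
  rw [hdet, lintegral_const_mul' _ _ (by finiteness)] at hcov
  calc homothetyIntegral μ Ω g s x
      = σ⁻¹ ^ finrank ℝ E * (σ ^ finrank ℝ E * homothetyIntegral μ Ω g s x) := by
        rw [← mul_assoc, ← mul_pow, ENNReal.inv_mul_cancel hσ (by finiteness), one_pow, one_mul]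
    _ = σ⁻¹ ^ finrank ℝ E * ∫⁻ y in (fun y => lineMap x y s) '' Ω, g y ∂μ := by
        rw [hcov, homothetyIntegral]
    _ ≤ σ⁻¹ ^ finrank ℝ E * ∫⁻ y in Ω, g y ∂μ := by gcongr

/-- The pointwise bound degenerates as `s → 0`; exchanging the roles of centre and point replaces
`s` by `1 - s`, so one may always assume `1 / 2 ≤ s`. -/
lemma lintegral_homothetyIntegral_le (hΩ : MeasurableSet Ω) (hconv : Convex ℝ Ω)
    (hg : Measurable g) {s : ℝ} (hs : s ∈ Ioc (0 : ℝ) 1) :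
    ∫⁻ x in Ω, homothetyIntegral μ Ω g s x ∂μ
      ≤ 2 ^ finrank ℝ E * (∫⁻ y in Ω, g y ∂μ) * μ Ω := by
  wlog hhalf : 1 / 2 ≤ s generalizing s
  · rw [← homothetyIntegral_one_sub_swap hg]
    exact this ⟨by linarith, by linarith [hs.1]⟩ (by linarith)
  have hinv : (ENNReal.ofReal s)⁻¹ ≤ 2 := by
    rw [ENNReal.inv_le_iff_inv_le, ← ENNReal.ofReal_ofNat 2, ← ENNReal.ofReal_inv_of_pos two_pos]
    exact ENNReal.ofReal_le_ofReal (by linarith)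
  calc ∫⁻ x in Ω, homothetyIntegral μ Ω g s x ∂μ
      ≤ ∫⁻ _ in Ω, 2 ^ finrank ℝ E * ∫⁻ y in Ω, g y ∂μ ∂μ :=
        setLIntegral_mono' hΩ fun x hx => (homothetyIntegral_le hΩ hconv g hs hx).trans (by gcongr)
    _ = _ := by simp

lemma homothetyIntegral_le_interpolation [IsFiniteMeasure (μ.restrict Ω)] (hΩ : MeasurableSet Ω)
    (hconv : Convex ℝ Ω) (hg : Measurable g) {r q : ℝ} (hr : 1 ≤ r) (hrq : r ≤ q) {s : ℝ}
    (hs : s ∈ Ioc (0 : ℝ) 1) {x : E} (hx : x ∈ Ω) :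
    homothetyIntegral μ Ω g s x ≤ μ Ω ^ (1 - 1 / r) * (∫⁻ y in Ω, g y ^ r ∂μ) ^ (1 / r - 1 / q)
      * (ENNReal.ofReal s ^ (-(finrank ℝ E * (1 / r - 1 / q)))
        * homothetyIntegral μ Ω (fun y => g y ^ r) s x ^ (1 / q)) := by
  set A := homothetyIntegral μ Ω (fun y => g y ^ r) s x
  have hexp : 0 ≤ 1 / r - 1 / q := sub_nonneg.2 (one_div_le_one_div_of_le (by linarith) hrq)
  have hpow : ((ENNReal.ofReal s)⁻¹ ^ finrank ℝ E) ^ (1 / r - 1 / q)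
      = ENNReal.ofReal s ^ (-(finrank ℝ E * (1 / r - 1 / q))) := by
    rw [← ENNReal.rpow_natCast, ← ENNReal.rpow_mul, ENNReal.inv_rpow, ENNReal.rpow_neg]
  calc homothetyIntegral μ Ω g s x
      ≤ A ^ (1 / r) * μ Ω ^ (1 - 1 / r) := homothetyIntegral_le_rpow hg hr s x
    _ = A ^ (1 / r - 1 / q) * A ^ (1 / q) * μ Ω ^ (1 - 1 / r) := by
        rw [← ENNReal.rpow_add_of_nonneg _ _ hexp (one_div_nonneg.2 (by linarith)), sub_add_cancel]
    _ ≤ ((ENNReal.ofReal s)⁻¹ ^ finrank ℝ E * ∫⁻ y in Ω, g y ^ r ∂μ) ^ (1 / r - 1 / q)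
          * A ^ (1 / q) * μ Ω ^ (1 - 1 / r) := by
        gcongr
        exact homothetyIntegral_le hΩ hconv _ hs hx
    _ = _ := by
        rw [ENNReal.mul_rpow_of_nonneg _ _ hexp, hpow]
        ring

lemma lintegral_Ioc_rpow_lt_top {a : ℝ} (ha : -1 < a) :
    ∫⁻ s in Ioc (0 : ℝ) 1, ENNReal.ofReal s ^ a < ∞ := by
  have hint : IntegrableOn (fun s : ℝ => s ^ a) (Ioc 0 1) :=
    (intervalIntegrable_iff_integrableOn_Ioc_of_le zero_le_one).1
      (intervalIntegral.intervalIntegrable_rpow' ha)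
  refine lt_of_eq_of_lt ?_ hint.lintegral_lt_top
  exact setLIntegral_congr_fun measurableSet_Ioc fun s hs => ENNReal.ofReal_rpow_of_pos hs.1

lemma one_lt_of_mul_sub_lt {d r q : ℝ} (hd : 0 ≤ d) (hr : 1 ≤ r) (hrq : r ≤ q)
    (hdim : d * (1 / r - 1 / q) < 1 - 1 / q) : 1 < q := by
  have hexp : 0 ≤ 1 / r - 1 / q := sub_nonneg.2 (one_div_le_one_div_of_le (by linarith) hrq)
  have hq : 1 / q < 1 := by linarith [mul_nonneg hd hexp]
  rwa [div_lt_one (by linarith)] at hq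

/-- Hölder's inequality in `s` puts the factor `s ^ (-d (1 / r - 1 / q))` in the dual of `L^q`; the
subcriticality assumption `hdim` is what makes it integrable there. -/
lemma exists_lintegral_homothetyIntegral_le (hΩ : MeasurableSet Ω) (hconv : Convex ℝ Ω)
    (hfin : μ Ω ≠ ∞) {r q : ℝ} (hr : 1 ≤ r) (hrq : r ≤ q)
    (hdim : finrank ℝ E * (1 / r - 1 / q) < 1 - 1 / q) :
    ∃ C : ℝ≥0∞, C ≠ ∞ ∧ ∀ g : E → ℝ≥0∞, Measurable g → ∀ x ∈ Ω,
      ∫⁻ s in Ioc (0 : ℝ) 1, homothetyIntegral μ Ω g s x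
        ≤ C * (∫⁻ y in Ω, g y ^ r ∂μ) ^ (1 / r - 1 / q)
          * (∫⁻ s in Ioc (0 : ℝ) 1, homothetyIntegral μ Ω (fun y => g y ^ r) s x) ^ (1 / q) := by
  have : IsFiniteMeasure (μ.restrict Ω) := isFiniteMeasure_restrict.2 hfin
  have hconj : q.HolderConjugate q.conjExponent :=
    .conjExponent (one_lt_of_mul_sub_lt (Nat.cast_nonneg _) hr hrq hdim)
  set q' := q.conjExponent
  set P := μ Ω ^ (1 - 1 / r)
  have hP : P ≠ ∞ := ENNReal.rpow_ne_top_of_nonneg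
    (sub_nonneg.2 (by rwa [div_le_one (by linarith)])) hfin
  set K := (∫⁻ s in Ioc (0 : ℝ) 1,
    (ENNReal.ofReal s ^ (-(finrank ℝ E * (1 / r - 1 / q)))) ^ q') ^ (1 / q')
  have hK : K ≠ ∞ := by
    refine ENNReal.rpow_ne_top_of_nonneg (one_div_nonneg.2 hconj.symm.nonneg) ?_
    simp_rw [← ENNReal.rpow_mul]
    refine (lintegral_Ioc_rpow_lt_top ?_).ne
    rw [neg_mul, neg_lt_neg_iff, ← lt_div_iff₀ hconj.symm.pos]
    linarith [hconj.inv_add_inv_eq_one, one_div q, one_div q']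
  refine ⟨P * K, ENNReal.mul_ne_top hP hK, fun g hg x hx => ?_⟩
  set G := ∫⁻ y in Ω, g y ^ r ∂μ
  set A := fun s => homothetyIntegral μ Ω (fun y => g y ^ r) s x
  have hA : Measurable A := (measurable_homothetyIntegral (hg.pow_const r)).of_uncurry_right
  calc ∫⁻ s in Ioc (0 : ℝ) 1, homothetyIntegral μ Ω g s x
      ≤ ∫⁻ s in Ioc (0 : ℝ) 1, P * G ^ (1 / r - 1 / q)
          * (ENNReal.ofReal s ^ (-(finrank ℝ E * (1 / r - 1 / q))) * A s ^ (1 / q)) :=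
        setLIntegral_mono' measurableSet_Ioc fun s hs =>
          homothetyIntegral_le_interpolation hΩ hconv hg hr hrq hs hx
    _ = P * G ^ (1 / r - 1 / q)
          * ∫⁻ s in Ioc (0 : ℝ) 1,
            ENNReal.ofReal s ^ (-(finrank ℝ E * (1 / r - 1 / q))) * A s ^ (1 / q) :=
        lintegral_const_mul _ (by fun_prop)
    _ ≤ P * G ^ (1 / r - 1 / q)
          * (K * (∫⁻ s in Ioc (0 : ℝ) 1, (A s ^ (1 / q)) ^ q) ^ (1 / q)) := by
        gcongr
        exact ENNReal.lintegral_mul_le_Lp_mul_Lq _ hconj.symm (by fun_prop) (by fun_prop)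
    _ = P * K * G ^ (1 / r - 1 / q) * (∫⁻ s in Ioc (0 : ℝ) 1, A s) ^ (1 / q) := by
        simp_rw [← ENNReal.rpow_mul, one_div_mul_cancel hconj.ne_zero, ENNReal.rpow_one]
        ring

lemma exists_lintegral_homothetyIntegral_rpow_le (hΩ : MeasurableSet Ω) (hconv : Convex ℝ Ω)
    (hfin : μ Ω ≠ ∞) {r q : ℝ} (hr : 1 ≤ r) (hrq : r ≤ q)
    (hdim : finrank ℝ E * (1 / r - 1 / q) < 1 - 1 / q) :
    ∃ C : ℝ≥0∞, C ≠ ∞ ∧ ∀ g : E → ℝ≥0∞, Measurable g →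
      ∫⁻ x in Ω, (∫⁻ s in Ioc (0 : ℝ) 1, homothetyIntegral μ Ω g s x) ^ q ∂μ
        ≤ C * (∫⁻ y in Ω, g y ^ r ∂μ) ^ (q / r) := by
  obtain ⟨K, hK, hholder⟩ := exists_lintegral_homothetyIntegral_le hΩ hconv hfin hr hrq hdim
  have hq : 0 < q := by linarith
  have hconst : K ^ q * (2 ^ finrank ℝ E * μ Ω) ≠ ∞ :=
    ENNReal.mul_ne_top (ENNReal.rpow_ne_top_of_nonneg hq.le hK)
      (ENNReal.mul_ne_top (by simp) hfin)
  refine ⟨K ^ q * (2 ^ finrank ℝ E * μ Ω), hconst, fun g hg => ?_⟩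
  set G := ∫⁻ y in Ω, g y ^ r ∂μ
  have hA : Measurable (uncurry fun x s => homothetyIntegral μ Ω (fun y => g y ^ r) s x) :=
    measurable_homothetyIntegral_swap (hg.pow_const r)
  set A := homothetyIntegral μ Ω fun y => g y ^ r
  calc ∫⁻ x in Ω, (∫⁻ s in Ioc (0 : ℝ) 1, homothetyIntegral μ Ω g s x) ^ q ∂μ
      ≤ ∫⁻ x in Ω, (K * G ^ (1 / r - 1 / q)) ^ q * (∫⁻ s in Ioc (0 : ℝ) 1, A s x) ∂μ :=
        setLIntegral_mono' hΩ fun x hx =>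
          (ENNReal.rpow_le_rpow (hholder g hg x hx) hq.le).trans_eq <| by
            rw [ENNReal.mul_rpow_of_nonneg _ _ hq.le, ← ENNReal.rpow_mul _ (1 / q),
              one_div_mul_cancel hq.ne', ENNReal.rpow_one]
    _ = (K * G ^ (1 / r - 1 / q)) ^ q * ∫⁻ s in Ioc (0 : ℝ) 1, ∫⁻ x in Ω, A s x ∂μ := by
        rw [lintegral_const_mul _ hA.lintegral_prod_right,
          lintegral_lintegral_swap hA.aemeasurable]
    _ ≤ (K * G ^ (1 / r - 1 / q)) ^ q * ∫⁻ _ in Ioc (0 : ℝ) 1, 2 ^ finrank ℝ E * G * μ Ω := by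
        exact mul_le_mul' le_rfl <| setLIntegral_mono' measurableSet_Ioc fun s hs =>
          lintegral_homothetyIntegral_le hΩ hconv (hg.pow_const r) hs
    _ = K ^ q * (2 ^ finrank ℝ E * μ Ω) * (G ^ (q / r - 1) * G ^ (1 : ℝ)) := by
        rw [setLIntegral_const, Real.volume_Ioc, sub_zero, ENNReal.ofReal_one,
          ENNReal.mul_rpow_of_nonneg _ _ hq.le, ← ENNReal.rpow_mul,
          show (1 / r - 1 / q) * q = q / r - 1 by field_simp, ENNReal.rpow_one]
        ring
    _ = K ^ q * (2 ^ finrank ℝ E * μ Ω) * G ^ (q / r) := by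
        rw [← ENNReal.rpow_add_of_nonneg _ _ _ zero_le_one, sub_add_cancel]
        rwa [sub_nonneg, one_le_div (by linarith)]

lemma enorm_sub_setAverage_le [CompleteSpace F] (hΩ : MeasurableSet Ω) (hbdd : IsBounded Ω)
    (hzero : μ Ω ≠ 0) {f : E → F} (hf : ContDiff ℝ 1 f) {x : E} (hx : x ∈ Ω) :
    ‖f x - ⨍ y in Ω, f y ∂μ‖ₑ ≤ (μ Ω)⁻¹ * Metric.ediam Ω
      * ∫⁻ s in Ioc (0 : ℝ) 1, homothetyIntegral μ Ω (fun y => ‖fderiv ℝ f y‖ₑ) s x := by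
  have : IsFiniteMeasure (μ.restrict Ω) := isFiniteMeasure_restrict.2 hbdd.measure_lt_top.ne
  have : NeZero (μ.restrict Ω) := ⟨by simpa using hzero⟩
  have hint : IntegrableOn f Ω μ :=
    (hf.continuous.continuousOn.integrableOn_compact hbdd.isCompact_closure).mono_set subset_closure
  have hDf : Measurable fun y => ‖fderiv ℝ f y‖ₑ :=
    (hf.continuous_fderiv one_ne_zero).enorm.measurable
  have hswap : ∫⁻ y in Ω, (∫⁻ s in Ioc (0 : ℝ) 1, ‖fderiv ℝ f (lineMap x y s)‖ₑ) ∂μ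
      = ∫⁻ s in Ioc (0 : ℝ) 1, homothetyIntegral μ Ω (fun y => ‖fderiv ℝ f y‖ₑ) s x :=
    lintegral_lintegral_swap
      (hDf.comp (by simp only [AffineMap.lineMap_apply_module]; fun_prop)).aemeasurable
  calc ‖f x - ⨍ y in Ω, f y ∂μ‖ₑ
      ≤ ⨍⁻ y in Ω, ‖f x - f y‖ₑ ∂μ := enorm_sub_average_le_laverage hint _
    _ = (μ Ω)⁻¹ * ∫⁻ y in Ω, ‖f x - f y‖ₑ ∂μ := by
        rw [setLAverage_eq, ENNReal.div_eq_inv_mul]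
    _ ≤ (μ Ω)⁻¹ * ∫⁻ y in Ω, Metric.ediam Ω
          * (∫⁻ s in Ioc (0 : ℝ) 1, ‖fderiv ℝ f (lineMap x y s)‖ₑ) ∂μ := by
        refine mul_le_mul' le_rfl <| setLIntegral_mono' hΩ fun y hy => ?_
        refine (enorm_sub_le_lintegral_fderiv_lineMap hf x y).trans ?_
        gcongr
        exact Metric.edist_le_ediam_of_mem hx hy
    _ = _ := by
        rw [lintegral_const_mul' _ _ hbdd.ediam_ne_top, hswap, mul_assoc]

theorem exists_eLpNorm_sub_setAverage_le [CompleteSpace F] (hΩ : MeasurableSet Ω)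
    (hconv : Convex ℝ Ω) (hbdd : IsBounded Ω) {r q : ℝ} (hr : 1 ≤ r) (hrq : r ≤ q)
    (hdim : finrank ℝ E * (1 / r - 1 / q) < 1 - 1 / q) :
    ∃ C : ℝ≥0∞, C ≠ ∞ ∧ ∀ f : E → F, ContDiff ℝ 1 f →
      eLpNorm (fun x => f x - ⨍ y in Ω, f y ∂μ) (.ofReal q) (μ.restrict Ω)
        ≤ C * eLpNorm (fderiv ℝ f) (.ofReal r) (μ.restrict Ω) := by
  have hq : 0 < q := by linarith
  rcases eq_or_ne (μ Ω) 0 with hzero | hzero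
  · exact ⟨0, ENNReal.zero_ne_top, fun f _ => by simp [Measure.restrict_eq_zero.2 hzero]⟩
  obtain ⟨C, hC, hT⟩ :=
    exists_lintegral_homothetyIntegral_rpow_le (μ := μ) hΩ hconv hbdd.measure_lt_top.ne hr hrq hdim
  set A := (μ Ω)⁻¹ * Metric.ediam Ω
  have hA : A ≠ ∞ := ENNReal.mul_ne_top (ENNReal.inv_ne_top.2 hzero) hbdd.ediam_ne_top
  refine ⟨A * C ^ (1 / q), ENNReal.mul_ne_top hA
    (ENNReal.rpow_ne_top_of_nonneg (by positivity) hC), fun f hf => ?_⟩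
  set g : E → ℝ≥0∞ := fun y => ‖fderiv ℝ f y‖ₑ
  have hg : Measurable g := (hf.continuous_fderiv one_ne_zero).enorm.measurable
  rw [eLpNorm_eq_lintegral_rpow_enorm_toReal (by simpa) ENNReal.ofReal_ne_top,
    eLpNorm_eq_lintegral_rpow_enorm_toReal (by simp; linarith) ENNReal.ofReal_ne_top,
    ENNReal.toReal_ofReal hq.le, ENNReal.toReal_ofReal (by linarith)]
  calc (∫⁻ x in Ω, ‖f x - ⨍ y in Ω, f y ∂μ‖ₑ ^ q ∂μ) ^ (1 / q)
      ≤ (∫⁻ x in Ω, A ^ q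
          * (∫⁻ s in Ioc (0 : ℝ) 1, homothetyIntegral μ Ω g s x) ^ q ∂μ) ^ (1 / q) := by
        refine ENNReal.rpow_le_rpow (setLIntegral_mono' hΩ fun x hx => ?_) (by positivity)
        rw [← ENNReal.mul_rpow_of_nonneg _ _ hq.le]
        exact ENNReal.rpow_le_rpow (enorm_sub_setAverage_le hΩ hbdd hzero hf hx) hq.le
    _ ≤ (A ^ q * (C * (∫⁻ y in Ω, g y ^ r ∂μ) ^ (q / r))) ^ (1 / q) := by
        rw [lintegral_const_mul' _ _ (ENNReal.rpow_ne_top_of_nonneg hq.le hA)]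
        gcongr
        exact hT g hg
    _ = A * C ^ (1 / q) * (∫⁻ y in Ω, g y ^ r ∂μ) ^ (1 / r) := by
        rw [ENNReal.mul_rpow_of_nonneg (A ^ q) _ (by positivity),
          ENNReal.mul_rpow_of_nonneg C _ (by positivity), ← ENNReal.rpow_mul, ← ENNReal.rpow_mul,
          mul_one_div_cancel hq.ne', ENNReal.rpow_one, mul_assoc A,
          show q / r * (1 / q) = 1 / r by field_simp]

end PoincareSobolev

section DefiningFunction

open scoped ContDiff

variable {E F : Type*} [NormedAddCommGroup E] [NormedSpace ℝ E] [NormedAddCommGroup F]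
  [NormedSpace ℝ F]

/-- `φ` is a smooth defining function of the domain `Ω`: negative exactly on `Ω`, and vanishing,
with nonzero derivative, exactly on the boundary. Boundary conditions are expressed through
`fderiv ℝ φ`, which spares the normalization of the normal. -/
structure IsDefiningFunction (φ : E → ℝ) (Ω : Set E) : Prop where
  contDiff : ContDiff ℝ ∞ φ
  eq_setOf : Ω = {x | φ x < 0}
  frontier_eq : frontier Ω = {x | φ x = 0}
  fderiv_ne_zero : ∀ x ∈ frontier Ω, fderiv ℝ φ x ≠ 0

/-- The vector field `w` is tangent to the boundary of the domain with defining function `φ`. -/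
def IsTangential (φ : E → ℝ) (Ω : Set E) (w : E → E) : Prop :=
  ∀ x ∈ frontier Ω, fderiv ℝ φ x (w x) = 0

/-- On the boundary `{φ = 0}`, `v` has the normal component `-D²φ(u, u)`, as the material derivative
of a tangential velocity field `u` does. -/
def HasQuadraticNormalComponent (φ : E → ℝ) (Ω : Set E) (u v : E → E) : Prop :=
  ∀ x ∈ frontier Ω, fderiv ℝ φ x (v x) = -fderiv ℝ (fderiv ℝ φ) x (u x) (u x)

lemma HasQuadraticNormalComponent.isTangential_sub {φ : E → ℝ} {Ω : Set E} {u v H : E → E}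
    (hv : HasQuadraticNormalComponent φ Ω u v) (hH : HasQuadraticNormalComponent φ Ω u H) :
    IsTangential φ Ω (v - H) := fun x hx => by
  rw [Pi.sub_apply, map_sub, hv x hx, hH x hx, sub_self]

lemma fderiv_fderiv_apply {f : E → F} (hf : ContDiff ℝ 2 f) {w : E → E} {x : E}
    (hw : DifferentiableAt ℝ w x) (v : E) :
    fderiv ℝ (fun y => fderiv ℝ f y (w y)) x v
      = fderiv ℝ (fderiv ℝ f) x v (w x) + fderiv ℝ f x (fderiv ℝ w x v) := by
  have hDf : DifferentiableAt ℝ (fderiv ℝ f) x :=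
    (hf.fderiv_right (m := 1) le_rfl).differentiable one_ne_zero x
  rw [(hDf.hasFDerivAt.clm_apply hw.hasFDerivAt).fderiv]
  simp [add_comm]

lemma deriv_comp_add_smul {f : E → ℝ} (hf : Differentiable ℝ f) (x v : E) (s : ℝ) :
    deriv (fun s : ℝ => f (x + s • v)) s = fderiv ℝ f (x + s • v) v :=
  ((hf _).hasFDerivAt.comp_hasDerivAt s
    (by simpa using ((hasDerivAt_id s).smul_const v).const_add x)).deriv

lemma deriv_deriv_comp_add_smul {f : E → ℝ} (hf : ContDiff ℝ 2 f) (x v : E) :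
    deriv (deriv fun s : ℝ => f (x + s • v)) 0 = fderiv ℝ (fderiv ℝ f) x v v := by
  have hDf : Differentiable ℝ fun y => fderiv ℝ f y v :=
    (((hf.fderiv_right (m := 1) le_rfl).clm_apply contDiff_const).differentiable one_ne_zero)
  rw [funext (deriv_comp_add_smul (hf.differentiable two_ne_zero) x v),
    deriv_comp_add_smul hDf, fderiv_fderiv_apply hf (differentiableAt_const v)]
  simp

lemma deriv_deriv_nonneg_of_isLocalMin {k : ℝ → ℝ} {s : ℝ} (hmin : IsLocalMin k s)
    (hk : ContinuousAt k s) : 0 ≤ deriv (deriv k) s := by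
  by_contra! hneg
  have hmax := isLocalMax_of_deriv_deriv_neg hneg hmin.deriv_eq_zero hk
  have hconst : k =ᶠ[𝓝 s] fun _ => k s := by
    filter_upwards [hmin, hmax] with r hr hr' using le_antisymm hr' hr
  simp [hconst.deriv.deriv_eq] at hneg

namespace IsDefiningFunction

variable {φ : E → ℝ} {Ω : Set E} (hφ : IsDefiningFunction φ Ω)
include hφ

lemma mem_iff {x : E} : x ∈ Ω ↔ φ x < 0 := Set.ext_iff.1 hφ.eq_setOf x

lemma mem_frontier_iff {x : E} : x ∈ frontier Ω ↔ φ x = 0 :=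
  Set.ext_iff.1 hφ.frontier_eq x

lemma isOpen : IsOpen Ω :=
  hφ.eq_setOf ▸ isOpen_lt hφ.contDiff.continuous continuous_const

lemma nonpos_of_mem_closure {x : E} (hx : x ∈ closure Ω) : φ x ≤ 0 :=
  closure_minimal (fun _ hy => (hφ.mem_iff.1 hy).le)
    (isClosed_le hφ.contDiff.continuous continuous_const) hx

lemma contDiff_two : ContDiff ℝ 2 φ := contDiff_infty.1 hφ.contDiff 2

lemma differentiable : Differentiable ℝ φ := hφ.contDiff.differentiable (by simp)

lemma fderiv_apply_eq_zero_of_eqOn_frontier [CompleteSpace E] {g : E → ℝ} (hg : ContDiff ℝ 1 g)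
    (hzero : ∀ y ∈ frontier Ω, g y = 0) {x v : E} (hx : x ∈ frontier Ω)
    (hv : fderiv ℝ φ x v = 0) : fderiv ℝ g x v = 0 := by
  have hlevel : frontier Ω = {y | φ y = φ x} := by
    rw [hφ.frontier_eq, hφ.mem_frontier_iff.1 hx]
  have hextr : IsLocalExtrOn g {y | φ y = φ x} x := .inl <| by
    filter_upwards [self_mem_nhdsWithin] with y hy
    rw [hzero x hx, hzero y (hlevel ▸ hy)]
  obtain ⟨a, b, hab, hlin⟩ := hextr.exists_multipliers_of_hasStrictFDerivAt_1d
    (hφ.contDiff.contDiffAt.hasStrictFDerivAt (by simp))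
    (hg.contDiffAt.hasStrictFDerivAt one_ne_zero)
  have hb : b ≠ 0 := by
    rintro rfl
    have ha : a ≠ 0 := fun ha => hab (by rw [ha]; rfl)
    exact (hφ.fderiv_ne_zero x hx) (by simpa [ha] using hlin)
  simpa [hv, hb] using DFunLike.congr_fun hlin v

/-- The normal component of `(w · ∇) w` is a zeroth-order quadratic expression in `w`, because
the tangential derivative of `fderiv ℝ φ · (w ·)` vanishes. -/
lemma fderiv_apply_fderiv_self [CompleteSpace E] {w : E → E} (hw : ContDiff ℝ 1 w)
    (htan : IsTangential φ Ω w) {x : E} (hx : x ∈ frontier Ω) :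
    fderiv ℝ φ x (fderiv ℝ w x (w x)) = -fderiv ℝ (fderiv ℝ φ) x (w x) (w x) := by
  have hG : ContDiff ℝ 1 fun y => fderiv ℝ φ y (w y) :=
    (hφ.contDiff_two.fderiv_right (m := 1) le_rfl).clm_apply hw
  have hzero := hφ.fderiv_apply_eq_zero_of_eqOn_frontier hG htan hx (htan x hx)
  rw [fderiv_fderiv_apply hφ.contDiff_two (hw.differentiable one_ne_zero x)] at hzero
  linarith

lemma fderiv_apply_materialDerivative [CompleteSpace E] {I : Set ℝ} (hI : UniqueDiffOn ℝ I)
    {u : ℝ → E → E} (htan : ∀ t ∈ I, IsTangential φ Ω (u t)) {t : ℝ} (ht : t ∈ I)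
    (hu : ContDiff ℝ 1 (u t)) {x u' : E} (hx : x ∈ frontier Ω)
    (hu' : HasDerivAt (fun s => u s x) u' t) :
    fderiv ℝ φ x (u' + fderiv ℝ (u t) x (u t x))
      = -fderiv ℝ (fderiv ℝ φ) x (u t x) (u t x) := by
  have htime : fderiv ℝ φ x u' = 0 :=
    (hI t ht).eq_deriv _ ((fderiv ℝ φ x).hasFDerivAt.comp_hasDerivAt t hu').hasDerivWithinAt
      ((hasDerivWithinAt_const t I 0).congr (fun s hs => htan s hs x hx) (htan t ht x hx))
  rw [map_add, htime, zero_add, hφ.fderiv_apply_fderiv_self hu (htan t ht) hx]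

lemma fderiv_sub_nonpos (hconv : Convex ℝ Ω) {x y : E} (hx : x ∈ frontier Ω)
    (hy : y ∈ closure Ω) : fderiv ℝ φ x (y - x) ≤ 0 := by
  have hx0 : φ x = 0 := hφ.mem_frontier_iff.1 hx
  have hmax : IsLocalMaxOn φ (closure Ω) x := by
    filter_upwards [self_mem_nhdsWithin] with z hz
    exact (hφ.nonpos_of_mem_closure hz).trans hx0.ge
  exact hmax.hasFDerivWithinAt_nonpos (hφ.differentiable x).hasFDerivAt.hasFDerivWithinAt
    (sub_mem_posTangentConeAt_of_segment_subset
      (hconv.closure.segment_subset (frontier_subset_closure hx) hy))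

lemma nonneg_of_fderiv_sub_eq_zero (hconv : Convex ℝ Ω) {x y : E} (hx : x ∈ frontier Ω)
    (hy : fderiv ℝ φ x (y - x) = 0) : 0 ≤ φ y := by
  by_contra! hneg
  have hmem : y ∈ Ω := hφ.mem_iff.2 hneg
  have hmax : IsLocalMax (fun z => fderiv ℝ φ x (z - x)) y := by
    filter_upwards [hφ.isOpen.mem_nhds hmem] with z hz
    exact (hφ.fderiv_sub_nonpos hconv hx (subset_closure hz)).trans hy.ge
  have hderiv : HasFDerivAt (fun z => fderiv ℝ φ x (z - x)) (fderiv ℝ φ x) y :=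
    (fderiv ℝ φ x).hasFDerivAt.comp y ((hasFDerivAt_id y).sub_const x)
  exact hφ.fderiv_ne_zero x hx (hmax.hasFDerivAt_eq_zero hderiv)

lemma fderiv_fderiv_nonneg (hconv : Convex ℝ Ω) {x v : E} (hx : x ∈ frontier Ω)
    (hv : fderiv ℝ φ x v = 0) : 0 ≤ fderiv ℝ (fderiv ℝ φ) x v v := by
  have hmin : IsLocalMin (fun s : ℝ => φ (x + s • v)) 0 := .of_forall fun s => by
    have hx0 : φ x = 0 := hφ.mem_frontier_iff.1 hx
    simpa [hx0] using hφ.nonneg_of_fderiv_sub_eq_zero hconv hx (y := x + s • v) (by simp [hv])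
  rw [← deriv_deriv_comp_add_smul hφ.contDiff_two]
  exact deriv_deriv_nonneg_of_isLocalMin hmin
    (hφ.contDiff.continuous.comp (by fun_prop)).continuousAt

end IsDefiningFunction

end DefiningFunction

section PlaneCalculus

variable {f : V2 → ℝ} {w X : V2 → V2} {x : V2}

lemma pd_apply (hw : DifferentiableAt ℝ w x) (i j : Fin 2) :
    pd i (fun y => w y j) x = fderiv ℝ w x (Pi.single i 1) j := by
  rw [pd, fderiv_apply hw j]
  rfl

lemma fderiv_apply_eq_dot_grad (f : V2 → ℝ) (x v : V2) : fderiv ℝ f x v = dot v (grad f x) := by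
  conv_lhs => rw [pi_eq_sum_univ' v, map_sum]
  simp [dot, grad, pd]

lemma fderiv_apply_grad (f : V2 → ℝ) (x : V2) : fderiv ℝ f x (grad f x) = nsq (grad f x) := by
  simp only [fderiv_apply_eq_dot_grad, dot, nsq, sq]

lemma nsq_pos {a : V2} (ha : a ≠ 0) : 0 < nsq a := by
  obtain ⟨i, hi⟩ := Function.ne_iff.1 ha
  exact Finset.sum_pos' (fun j _ => sq_nonneg (a j)) ⟨i, Finset.mem_univ i, sq_pos_of_ne_zero hi⟩

lemma fderiv_apply_grad_pos (hf : fderiv ℝ f x ≠ 0) : 0 < fderiv ℝ f x (grad f x) := by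
  rw [fderiv_apply_grad]
  refine nsq_pos fun h => hf ?_
  ext v
  simp [fderiv_apply_eq_dot_grad, h, dot]

lemma div2_eq_sum_fderiv (hw : DifferentiableAt ℝ w x) :
    div2 w x = ∑ i, fderiv ℝ w x (Pi.single i 1) i :=
  Finset.sum_congr rfl fun i _ => pd_apply hw i i

lemma div2_add (hw : DifferentiableAt ℝ w x) (hX : DifferentiableAt ℝ X x) :
    div2 (w + X) x = div2 w x + div2 X x := by
  rw [div2_eq_sum_fderiv hw, div2_eq_sum_fderiv hX, div2_eq_sum_fderiv (hw.add hX),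
    fderiv_add hw hX]
  simp [Finset.sum_add_distrib]

lemma div2_const_smul (c : ℝ) (hw : DifferentiableAt ℝ w x) :
    div2 (c • w) x = c * div2 w x := by
  rw [div2_eq_sum_fderiv hw, div2_eq_sum_fderiv (hw.const_smul c), fderiv_const_smul hw]
  simp [mul_add]

lemma div2_sub (hw : DifferentiableAt ℝ w x) (hX : DifferentiableAt ℝ X x) :
    div2 (w - X) x = div2 w x - div2 X x := by
  rw [div2_eq_sum_fderiv hw, div2_eq_sum_fderiv hX, div2_eq_sum_fderiv (hw.sub hX),
    fderiv_sub hw hX]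
  simp [Finset.sum_sub_distrib]

lemma div2_smul (hf : DifferentiableAt ℝ f x) (hw : DifferentiableAt ℝ w x) :
    div2 (fun y => f y • w y) x = f x * div2 w x + fderiv ℝ f x (w x) := by
  rw [div2_eq_sum_fderiv hw, div2_eq_sum_fderiv (hf.fun_smul hw), fderiv_fun_smul hf hw,
    fderiv_apply_eq_dot_grad]
  simp only [add_apply, smul_apply, ContinuousLinearMap.smulRight_apply, Pi.add_apply,
    Pi.smul_apply, smul_eq_mul, Fin.sum_univ_two, dot, grad, pd]
  ring

lemma curl2_eq_fderiv (hw : DifferentiableAt ℝ w x) :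
    curl2 w x = fderiv ℝ w x (Pi.single 0 1) 1 - fderiv ℝ w x (Pi.single 1 1) 0 := by
  rw [curl2, pd_apply hw, pd_apply hw]

lemma curl2_sub (hw : DifferentiableAt ℝ w x) (hX : DifferentiableAt ℝ X x) :
    curl2 (w - X) x = curl2 w x - curl2 X x := by
  rw [curl2_eq_fderiv hw, curl2_eq_fderiv hX, curl2_eq_fderiv (hw.sub hX), fderiv_sub hw hX]
  simp only [sub_apply, Pi.sub_apply]
  ring

lemma gnsq_eq_sum_fderiv (hw : DifferentiableAt ℝ w x) :
    gnsq w x = ∑ i, ∑ j, fderiv ℝ w x (Pi.single j 1) i ^ 2 := by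
  simp only [gnsq, pd_apply hw]

end PlaneCalculus

section BoundedSets

variable {E F : Type*} [MetricSpace E] [ProperSpace E] [MeasurableSpace E]
  [OpensMeasurableSpace E] [NormedAddCommGroup F] {μ : Measure E} [IsFiniteMeasureOnCompacts μ]
  {Ω : Set E} {f : E → F}

lemma memLp_of_isBounded (hΩ : IsBounded Ω) (hf : Continuous f) (p : ENNReal) :
    MemLp f p (μ.restrict Ω) := by
  have : IsFiniteMeasure (μ.restrict (closure Ω)) :=
    ⟨by simpa using hΩ.isCompact_closure.measure_lt_top⟩
  obtain ⟨C, hC⟩ := hΩ.isCompact_closure.exists_bound_of_continuousOn hf.continuousOn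
  exact (MemLp.of_bound hf.aestronglyMeasurable C
    (ae_restrict_of_forall_mem isClosed_closure.measurableSet hC)).mono_measure
      (Measure.restrict_mono subset_closure le_rfl)

lemma integrableOn_of_isBounded (hΩ : IsBounded Ω) (hf : Continuous f) : IntegrableOn f Ω μ :=
  memLp_one_iff_integrable.1 (memLp_of_isBounded hΩ hf 1)

end BoundedSets

section DivergenceTheorem

variable {φ ψ : V2 → ℝ} {X : V2 → V2} {Ω : Set V2}

lemma continuous_div2 (hX : ContDiff ℝ 1 X) : Continuous (div2 X) := by
  have := hX.continuous_fderiv one_ne_zero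
  have hdiv : div2 X = fun x => ∑ i, fderiv ℝ X x (Pi.single i 1) i :=
    funext fun x => div2_eq_sum_fderiv (hX.differentiable one_ne_zero x)
  rw [hdiv]
  fun_prop

lemma integral_mul_div2_eq_neg (hψ : ContDiff ℝ 1 ψ) (hsupp : HasCompactSupport ψ)
    (hX : ContDiff ℝ 1 X) : ∫ x, ψ x * div2 X x = -∫ x, fderiv ℝ ψ x (X x) := by
  have hDψ := hψ.continuous_fderiv one_ne_zero
  have := hX.continuous_fderiv one_ne_zero
  have hsupp' : HasCompactSupport (fderiv ℝ ψ) := hsupp.fderiv ℝ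
  have hint : ∀ i, Integrable fun x => ψ x * pd i (fun y => X y i) x := fun i => by
    simp only [pd_apply (hX.differentiable one_ne_zero _)]
    exact (hψ.continuous.mul (by fun_prop)).integrable_of_hasCompactSupport hsupp.mul_right
  have hint' : ∀ i, Integrable fun x => pd i ψ x * X x i := fun i =>
    ((hDψ.clm_apply continuous_const).mul
      ((continuous_apply i).comp hX.continuous)).integrable_of_hasCompactSupport
      ((hsupp'.comp_left (g := fun L : V2 →L[ℝ] ℝ => L (Pi.single i 1)) (by simp)).mul_right)
  have hparts : ∀ i, ∫ x, ψ x * pd i (fun y => X y i) x = -∫ x, pd i ψ x * X x i := fun i =>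
    integral_mul_fderiv_eq_neg_fderiv_mul_of_integrable (hint' i) (hint i)
      ((hψ.continuous.mul
        ((continuous_apply i).comp hX.continuous)).integrable_of_hasCompactSupport hsupp.mul_right)
      (fun x _ => hψ.differentiable one_ne_zero x)
      (fun x _ => differentiableAt_pi.1 (hX.differentiable one_ne_zero x) i)
  calc ∫ x, ψ x * div2 X x = ∑ i, ∫ x, ψ x * pd i (fun y => X y i) x := by
        rw [← integral_finsetSum _ fun i _ => hint i]
        simp only [div2, Finset.mul_sum]
    _ = -∑ i, ∫ x, pd i ψ x * X x i := by simp only [hparts, Finset.sum_neg_distrib]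
    _ = -∫ x, fderiv ℝ ψ x (X x) := by
        rw [← integral_finsetSum _ fun i _ => hint' i]
        simp only [fderiv_apply_eq_dot_grad, dot, grad, mul_comm]

/-- A smooth approximation of the indicator function of `{φ < 0}`: it is `1` where `φ ≤ -ε` and
`0` where `0 ≤ φ`. -/
def boundaryCutoff {E : Type*} (φ : E → ℝ) (ε : ℝ) (x : E) : ℝ := smoothTransition (-φ x / ε)

section boundaryCutoff

variable {E : Type*} {φ : E → ℝ} {ε : ℝ} {x : E}

lemma boundaryCutoff_eq_one (hε : 0 < ε) (hx : φ x ≤ -ε) : boundaryCutoff φ ε x = 1 :=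
  smoothTransition.one_of_one_le <| (one_le_div hε).2 (by linarith)

lemma boundaryCutoff_eq_zero (hε : 0 < ε) (hx : 0 ≤ φ x) : boundaryCutoff φ ε x = 0 :=
  smoothTransition.zero_of_nonpos <|
    div_nonpos_of_nonpos_of_nonneg (neg_nonpos.2 hx) hε.le

variable [NormedAddCommGroup E] [NormedSpace ℝ E]

lemma contDiff_boundaryCutoff {k : ℕ∞} (hφ : ContDiff ℝ k φ) (ε : ℝ) :
    ContDiff ℝ k (boundaryCutoff φ ε) :=
  smoothTransition.contDiff.comp (hφ.neg.div_const ε)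

lemma deriv_smoothTransition_eq_zero {s : ℝ} (hs : s ∉ Ioo 0 1) : deriv smoothTransition s = 0 := by
  rcases le_or_gt s 0 with hs' | hs'
  · refine IsLocalMin.deriv_eq_zero (.of_forall fun r => ?_)
    rw [smoothTransition.zero_of_nonpos hs']
    exact smoothTransition.nonneg r
  · refine IsLocalMax.deriv_eq_zero (.of_forall fun r => ?_)
    rw [smoothTransition.one_of_one_le (not_lt.1 fun h => hs ⟨hs', h⟩)]
    exact smoothTransition.le_one r

lemma fderiv_boundaryCutoff (hφ : DifferentiableAt ℝ φ x) (ε : ℝ) :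
    fderiv ℝ (boundaryCutoff φ ε) x = -(deriv smoothTransition (-φ x / ε) / ε) • fderiv ℝ φ x := by
  have houter : DifferentiableAt ℝ smoothTransition (-φ x / ε) :=
    (smoothTransition.contDiff (n := 1)).differentiable one_ne_zero _
  have hinner : HasFDerivAt (fun y => -φ y / ε) (ε⁻¹ • -fderiv ℝ φ x) x := by
    simpa only [div_eq_inv_mul] using hφ.hasFDerivAt.fun_neg.const_mul ε⁻¹
  have hcomp := (houter.hasDerivAt.comp_hasFDerivAt x hinner).fderiv
  rw [show boundaryCutoff φ ε = smoothTransition ∘ fun y => -φ y / ε from rfl, hcomp, smul_smul,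
    smul_neg, neg_smul, ← div_eq_mul_inv]

lemma fderiv_boundaryCutoff_apply_nonpos (hφ : DifferentiableAt ℝ φ x) (hε : 0 < ε) {v : E}
    (hv : φ x ∈ Ioo (-ε) 0 → 0 ≤ fderiv ℝ φ x v) :
    fderiv ℝ (boundaryCutoff φ ε) x v ≤ 0 := by
  rw [fderiv_boundaryCutoff hφ]
  by_cases hs : -φ x / ε ∈ Ioo (0 : ℝ) 1
  · have hx : φ x ∈ Ioo (-ε) 0 := by
      rw [mem_Ioo, div_pos_iff_of_pos_right hε, div_lt_one hε] at hs
      constructor <;> linarith [hs.1, hs.2]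
    have hcoef : 0 ≤ deriv smoothTransition (-φ x / ε) / ε :=
      div_nonneg smoothTransition.monotone.deriv_nonneg hε.le
    simpa using mul_nonneg hcoef (hv hx)
  · simp [deriv_smoothTransition_eq_zero hs]

end boundaryCutoff

namespace IsDefiningFunction

variable (hφ : IsDefiningFunction φ Ω) (hbdd : IsBounded Ω)
include hφ

lemma tendsto_setIntegral_boundaryCutoff_mul {f : V2 → ℝ} (hf : IntegrableOn f Ω) :
    Tendsto (fun ε => ∫ x in Ω, boundaryCutoff φ ε x * f x) (𝓝[>] 0) (𝓝 (∫ x in Ω, f x)) := by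
  refine tendsto_integral_filter_of_dominated_convergence (fun x => |f x|)
    (.of_forall fun ε => ?_) (.of_forall fun ε => .of_forall fun x => ?_) hf.abs ?_
  · exact (contDiff_boundaryCutoff hφ.contDiff ε).continuous.aestronglyMeasurable.mul
      hf.aestronglyMeasurable
  · rw [norm_mul, norm_eq_abs, norm_eq_abs, boundaryCutoff,
      abs_of_nonneg (smoothTransition.nonneg _)]
    exact mul_le_of_le_one_left (abs_nonneg _) (smoothTransition.le_one _)
  · filter_upwards [ae_restrict_mem hφ.isOpen.measurableSet] with x hx
    have hneg : 0 < -φ x := neg_pos.2 (hφ.mem_iff.1 hx)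
    refine tendsto_const_nhds.congr' ?_
    filter_upwards [self_mem_nhdsWithin, mem_nhdsWithin_of_mem_nhds (Iio_mem_nhds hneg)]
      with ε hε hεx
    rw [boundaryCutoff_eq_one hε (by linarith [mem_Iio.1 hεx]), one_mul]

include hbdd

lemma setIntegral_boundaryCutoff_mul_div2_nonneg (hX : ContDiff ℝ 1 X) {ε : ℝ} (hε : 0 < ε)
    (hpos : ∀ x, φ x ∈ Ioo (-ε) 0 → 0 ≤ fderiv ℝ φ x (X x)) :
    0 ≤ ∫ x in Ω, boundaryCutoff φ ε x * div2 X x := by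
  have hzero : ∀ x ∉ Ω, boundaryCutoff φ ε x = 0 := fun x hx =>
    boundaryCutoff_eq_zero hε (not_lt.1 fun h => hx (hφ.mem_iff.2 h))
  have hsupp : HasCompactSupport (boundaryCutoff φ ε) :=
    .intro hbdd.isCompact_closure fun x hx => hzero x fun h => hx (subset_closure h)
  rw [setIntegral_eq_integral_of_forall_compl_eq_zero fun x hx => by rw [hzero x hx, zero_mul],
    integral_mul_div2_eq_neg
      ((contDiff_boundaryCutoff hφ.contDiff ε).of_le (mod_cast le_top)) hsupp hX, neg_nonneg]
  exact integral_nonpos fun x =>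
    fderiv_boundaryCutoff_apply_nonpos (hφ.differentiable x) hε (hpos x)

lemma eventually_pos_of_pos_on_frontier {f : V2 → ℝ} (hf : Continuous f)
    (hpos : ∀ x ∈ frontier Ω, 0 < f x) :
    ∀ᶠ ε in 𝓝[>] (0 : ℝ), ∀ x, φ x ∈ Ioo (-ε) 0 → 0 < f x := by
  have hK : IsCompact (closure Ω ∩ {x | f x ≤ 0}) :=
    hbdd.isCompact_closure.inter_right (isClosed_le hf continuous_const)
  obtain ⟨c, hc, hle⟩ : ∃ c < 0, ∀ x ∈ closure Ω ∩ {x | f x ≤ 0}, φ x ≤ c := by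
    rcases (closure Ω ∩ {x | f x ≤ 0}).eq_empty_or_nonempty with hempty | hne
    · exact ⟨-1, by norm_num, by simp [hempty]⟩
    obtain ⟨z, hz, hmax⟩ := hK.exists_isMaxOn hne hφ.contDiff.continuous.continuousOn
    refine ⟨φ z, (hφ.nonpos_of_mem_closure hz.1).lt_of_ne fun h => ?_, fun x hx => hmax hx⟩
    exact (hpos z (hφ.mem_frontier_iff.2 h)).not_ge hz.2
  filter_upwards [mem_nhdsWithin_of_mem_nhds (Iio_mem_nhds (neg_pos.2 hc))] with ε hε x hx
  by_contra! hfx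
  linarith [hle x ⟨subset_closure (hφ.mem_iff.2 hx.2), hfx⟩, hx.1, mem_Iio.1 hε]

lemma setIntegral_div2_nonneg_of_pos (hX : ContDiff ℝ 1 X)
    (hpos : ∀ x ∈ frontier Ω, 0 < fderiv ℝ φ x (X x)) : 0 ≤ ∫ x in Ω, div2 X x := by
  have hnormal : Continuous fun x => fderiv ℝ φ x (X x) :=
    (hφ.contDiff.continuous_fderiv (by simp)).clm_apply hX.continuous
  refine ge_of_tendsto (hφ.tendsto_setIntegral_boundaryCutoff_mul
    (integrableOn_of_isBounded hbdd (continuous_div2 hX))) ?_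
  filter_upwards [self_mem_nhdsWithin, hφ.eventually_pos_of_pos_on_frontier hbdd hnormal hpos]
    with ε hε hcollar
  exact hφ.setIntegral_boundaryCutoff_mul_div2_nonneg hbdd hX hε fun x hx => (hcollar x hx).le

/-- Perturbing `X` by `δ ∇φ` makes the flux positive on a whole inner collar of the boundary, where
the derivatives of the cutoff functions live. -/
lemma setIntegral_div2_nonneg (hX : ContDiff ℝ 1 X)
    (hnonneg : ∀ x ∈ frontier Ω, 0 ≤ fderiv ℝ φ x (X x)) : 0 ≤ ∫ x in Ω, div2 X x := by
  have hgrad : ContDiff ℝ 1 (grad φ) := contDiff_pi.2 fun i =>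
    (hφ.contDiff_two.fderiv_right (m := 1) le_rfl).clm_apply contDiff_const
  have hperturbed : ∀ δ > 0, 0 ≤ (∫ x in Ω, div2 X x) + δ * ∫ x in Ω, div2 (grad φ) x :=
      fun δ hδ => by
    have hdiv : ∀ x, div2 (X + δ • grad φ) x = div2 X x + δ * div2 (grad φ) x := fun x => by
      have hgrad' := hgrad.differentiable one_ne_zero x
      rw [div2_add (hX.differentiable one_ne_zero x) (hgrad'.const_smul δ),
        div2_const_smul δ hgrad']
    have hstrict := hφ.setIntegral_div2_nonneg_of_pos hbdd (X := X + δ • grad φ)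
      (hX.add (hgrad.const_smul δ)) fun x hx => by
        simpa using add_pos_of_nonneg_of_pos (hnonneg x hx)
          (mul_pos hδ (fderiv_apply_grad_pos (hφ.fderiv_ne_zero x hx)))
    simp only [hdiv] at hstrict
    rwa [integral_add (integrableOn_of_isBounded hbdd (continuous_div2 hX))
      ((integrableOn_of_isBounded hbdd (continuous_div2 hgrad)).const_mul δ),
      integral_const_mul] at hstrict
  have hlim : Tendsto (fun δ => (∫ x in Ω, div2 X x) + δ * ∫ x in Ω, div2 (grad φ) x) (𝓝[>] 0)
      (𝓝 ((∫ x in Ω, div2 X x) + 0 * ∫ x in Ω, div2 (grad φ) x)) :=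
    (Continuous.tendsto (by fun_prop) 0).mono_left nhdsWithin_le_nhds
  rw [zero_mul, add_zero] at hlim
  exact ge_of_tendsto hlim (eventually_nhdsWithin_of_forall hperturbed)

lemma setIntegral_div2_eq_zero (hX : ContDiff ℝ 1 X) (htan : IsTangential φ Ω X) :
    ∫ x in Ω, div2 X x = 0 := by
  refine le_antisymm ?_ (hφ.setIntegral_div2_nonneg hbdd hX fun x hx => (htan x hx).ge)
  have hneg := hφ.setIntegral_div2_nonneg hbdd (X := (-1 : ℝ) • X)
    (hX.const_smul (-1 : ℝ)) fun x hx => by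
    simp [htan x hx]
  simp only [div2_const_smul (-1 : ℝ) (hX.differentiable one_ne_zero _), integral_const_mul] at hneg
  linarith

end IsDefiningFunction

end DivergenceTheorem

section DivCurl

variable {φ : V2 → ℝ} {w : V2 → V2} {Ω : Set V2}

lemma contDiff_div2 {k : ℕ} (hw : ContDiff ℝ (k + 1) w) : ContDiff ℝ k (div2 w) :=
  ContDiff.sum fun i _ =>
    ((contDiff_pi.1 hw i).fderiv_right (m := k) le_rfl).clm_apply contDiff_const

lemma fderiv_div2_apply (hw : ContDiff ℝ 2 w) (x v : V2) :
    fderiv ℝ (div2 w) x v = ∑ i, fderiv ℝ (fderiv ℝ w) x v (Pi.single i 1) i := by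
  have hDw : Differentiable ℝ (fderiv ℝ w) :=
    (hw.fderiv_right (m := 1) le_rfl).differentiable one_ne_zero
  have hdiv : div2 w = fun x => ∑ i, fderiv ℝ w x (Pi.single i 1) i :=
    funext fun x => div2_eq_sum_fderiv (hw.differentiable two_ne_zero x)
  have hcoord : ∀ i, HasFDerivAt (fun y => fderiv ℝ w y (Pi.single i 1) i)
      ((ContinuousLinearMap.proj i).comp ((fderiv ℝ (fderiv ℝ w) x).flip (Pi.single i 1))) x :=
    fun i => by
      have := (hDw x).hasFDerivAt.clm_apply (hasFDerivAt_const (Pi.single i 1) x)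
      simpa using hasFDerivAt_pi'.1 this i
  rw [hdiv, (HasFDerivAt.fun_sum fun i _ => hcoord i).fderiv]
  simp

lemma div2_fderiv_apply_self (hw : ContDiff ℝ 2 w) (x : V2) :
    div2 (fun y => fderiv ℝ w y (w y)) x
      = fderiv ℝ (div2 w) x (w x) + (gnsq w x - curl2 w x ^ 2) := by
  have hw1 : Differentiable ℝ w := hw.differentiable two_ne_zero
  have hX : ContDiff ℝ 1 fun y => fderiv ℝ w y (w y) :=
    (hw.fderiv_right (m := 1) le_rfl).clm_apply (hw.of_le one_le_two)
  have hsymm : ∀ v, fderiv ℝ (fderiv ℝ w) x v (w x) = fderiv ℝ (fderiv ℝ w) x (w x) v :=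
    fun v => (hw.contDiffAt.isSymmSndFDerivAt (by simp)).eq v (w x)
  have htrace : ∀ A : V2 →L[ℝ] V2, ∑ i, A (A (Pi.single i 1)) i
      = ∑ i, ∑ j, A (Pi.single j 1) i ^ 2
        - (A (Pi.single 0 1) 1 - A (Pi.single 1 1) 0) ^ 2 := fun A => by
    have happly : ∀ v i, A v i = v 0 * A (Pi.single 0 1) i + v 1 * A (Pi.single 1 1) i :=
      fun v i => by
        conv_lhs => rw [pi_eq_sum_univ' v, map_sum]
        simp
    simp only [happly (A _), Fin.sum_univ_two]
    ring
  rw [div2_eq_sum_fderiv (hX.differentiable one_ne_zero x), fderiv_div2_apply hw,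
    gnsq_eq_sum_fderiv (hw1 x), curl2_eq_fderiv (hw1 x), ← htrace]
  simp only [fderiv_fderiv_apply hw (hw1 x), hsymm, Pi.add_apply, Finset.sum_add_distrib]

/-- Both sides are quadratic in the first derivatives: the second derivatives of `w` cancel. -/
lemma div2_div2_smul_sub_fderiv_apply_self (hw : ContDiff ℝ 2 w) (x : V2) :
    div2 ((fun y => div2 w y • w y) - fun y => fderiv ℝ w y (w y)) x
      = div2 w x ^ 2 + curl2 w x ^ 2 - gnsq w x := by
  have hw1 := hw.differentiable two_ne_zero x
  have hdiv := (contDiff_div2 (k := 1) hw).differentiable one_ne_zero x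
  have hX : ContDiff ℝ 1 fun y => fderiv ℝ w y (w y) :=
    (hw.fderiv_right (m := 1) le_rfl).clm_apply (hw.of_le one_le_two)
  rw [div2_sub (hdiv.fun_smul hw1) (hX.differentiable one_ne_zero x), div2_smul hdiv hw1,
    div2_fderiv_apply_self hw]
  ring

lemma continuous_curl2 (hw : ContDiff ℝ 1 w) : Continuous (curl2 w) := by
  have := hw.continuous_fderiv one_ne_zero
  have hcurl : curl2 w = fun x => _ :=
    funext fun x => curl2_eq_fderiv (hw.differentiable one_ne_zero x)
  rw [hcurl]
  fun_prop

lemma continuous_gnsq (hw : ContDiff ℝ 1 w) : Continuous (gnsq w) := by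
  have := hw.continuous_fderiv one_ne_zero
  have hgnsq : gnsq w = fun x => _ :=
    funext fun x => gnsq_eq_sum_fderiv (hw.differentiable one_ne_zero x)
  rw [hgnsq]
  fun_prop

namespace IsDefiningFunction

variable (hφ : IsDefiningFunction φ Ω) (hbdd : IsBounded Ω)
include hφ hbdd

/-- The boundary term of the identity behind this estimate is the second fundamental form of the
boundary evaluated at `w`, which has a sign because `Ω` is convex. -/
theorem setIntegral_gnsq_le (hconv : Convex ℝ Ω) (hw : ContDiff ℝ 2 w)
    (htan : IsTangential φ Ω w) :
    ∫ x in Ω, gnsq w x ≤ ∫ x in Ω, (div2 w x ^ 2 + curl2 w x ^ 2) := by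
  have hw1 : ContDiff ℝ 1 w := hw.of_le one_le_two
  have hX : ContDiff ℝ 1 ((fun y => div2 w y • w y) - fun y => fderiv ℝ w y (w y)) :=
    ((contDiff_div2 (k := 1) hw).smul hw1).sub
      ((hw.fderiv_right (m := 1) le_rfl).clm_apply hw1)
  have hnonneg := hφ.setIntegral_div2_nonneg hbdd hX fun x hx => by
    simpa [htan x hx, hφ.fderiv_apply_fderiv_self hw1 htan hx] using
      hφ.fderiv_fderiv_nonneg hconv hx (htan x hx)
  have hdivcurl : Continuous fun x => div2 w x ^ 2 + curl2 w x ^ 2 :=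
    ((continuous_div2 hw1).pow 2).add ((continuous_curl2 hw1).pow 2)
  simp only [div2_div2_smul_sub_fderiv_apply_self hw] at hnonneg
  rwa [integral_sub (integrableOn_of_isBounded hbdd hdivcurl)
    (integrableOn_of_isBounded hbdd (continuous_gnsq hw1)), sub_nonneg] at hnonneg

lemma setIntegral_eq_neg_setIntegral_div2_smul (hw : ContDiff ℝ 1 w) (htan : IsTangential φ Ω w) :
    ∫ x in Ω, w x = -∫ x in Ω, div2 w x • x := by
  ext i
  have hflux := hφ.setIntegral_div2_eq_zero hbdd
    (X := fun y => y i • w y) ((contDiff_apply ℝ ℝ i).smul hw) fun x hx => by simp [htan x hx]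
  have hdiv : ∀ x, div2 (fun y => y i • w y) x = x i * div2 w x + w x i := fun x => by
    rw [div2_smul (differentiableAt_apply i x) (hw.differentiable one_ne_zero x),
      (hasFDerivAt_apply i x).fderiv]
    rfl
  have hint := integrableOn_of_isBounded (μ := volume) hbdd hw.continuous
  have hint' : IntegrableOn (fun x => div2 w x • x) Ω :=
    integrableOn_of_isBounded hbdd ((continuous_div2 hw).smul continuous_id)
  simp only [hdiv] at hflux
  rw [integral_add (by simpa [mul_comm] using Integrable.eval hint' i) (Integrable.eval hint i)]
    at hflux
  rw [Pi.neg_apply, eval_integral (Integrable.eval hint), eval_integral (Integrable.eval hint')]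
  simp only [Pi.smul_apply, smul_eq_mul, mul_comm (div2 w _)]
  linarith

lemma exists_norm_setIntegral_le_integral_abs_div2 :
    ∃ R, 0 ≤ R ∧ ∀ w, ContDiff ℝ 1 w → IsTangential φ Ω w →
      ‖∫ x in Ω, w x‖ ≤ R * ∫ x in Ω, |div2 w x| := by
  obtain ⟨R, hR⟩ := hbdd.exists_norm_le
  refine ⟨max R 0, le_max_right R 0, fun w hw htan => ?_⟩
  have hdiv := (continuous_div2 hw)
  rw [hφ.setIntegral_eq_neg_setIntegral_div2_smul hbdd hw htan, norm_neg, ← integral_const_mul]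
  refine (norm_integral_le_integral_norm _).trans (setIntegral_mono_on
    (integrableOn_of_isBounded hbdd (by fun_prop)) (integrableOn_of_isBounded hbdd (by fun_prop))
    hφ.isOpen.measurableSet fun x hx => ?_)
  rw [norm_smul, norm_eq_abs, mul_comm]
  gcongr
  exact (hR x hx).trans (le_max_left R 0)

end IsDefiningFunction

end DivCurl

section LpNorm

open scoped ENNReal

section General

variable {α F : Type*} [MeasurableSpace α] [NormedAddCommGroup F] {μ : Measure α} {f : α → F}

lemma lpNorm_le_lpNorm_mul_rpow_measureReal_univ [IsFiniteMeasure μ] {p q : ℝ≥0∞} (hpq : p ≤ q)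
    (hf : MemLp f q μ) :
    lpNorm f p μ ≤ lpNorm f q μ * (μ.real univ ^ (1 / p.toReal - 1 / q.toReal)) := by
  rcases eq_or_ne μ 0 with rfl | hμ
  · simp
  rw [← toReal_eLpNorm hf.aestronglyMeasurable, ← toReal_eLpNorm hf.aestronglyMeasurable,
    Measure.real, ENNReal.toReal_rpow, ← ENNReal.toReal_mul]
  exact ENNReal.toReal_mono (ENNReal.mul_ne_top hf.eLpNorm_ne_top
      (ENNReal.rpow_ne_top_of_ne_zero (by simpa using hμ) (measure_ne_top μ univ)))
    (eLpNorm_le_eLpNorm_mul_rpow_measure_univ hpq hf.aestronglyMeasurable)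

lemma lpNorm_le_mul_lpNorm {G : Type*} [NormedAddCommGroup G] {p : ℝ≥0∞} {g : α → G} {c : ℝ}
    (hc : 0 ≤ c) (hg : MemLp g p μ) (hfg : ∀ᵐ x ∂μ, ‖f x‖ ≤ c * ‖g x‖) :
    lpNorm f p μ ≤ c * lpNorm g p μ := by
  by_cases hf : AEStronglyMeasurable f μ
  · rw [← toReal_eLpNorm hf, ← toReal_eLpNorm hg.aestronglyMeasurable,
      ← ENNReal.toReal_ofReal_mul _ _ hc]
    exact ENNReal.toReal_mono (ENNReal.mul_ne_top ENNReal.ofReal_ne_top hg.eLpNorm_ne_top)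
      (eLpNorm_le_mul_eLpNorm_of_ae_le_mul hfg p)
  · rw [lpNorm_of_not_aestronglyMeasurable hf]
    exact mul_nonneg hc lpNorm_nonneg

lemma lpNorm_norm_sq (hf : AEStronglyMeasurable f μ) (p : ℝ≥0∞) :
    lpNorm (fun x => ‖f x‖ ^ 2) p μ = lpNorm f (p * 2) μ ^ 2 := by
  have h := eLpNorm_norm_rpow (p := p) (μ := μ) f two_pos
  simp only [ENNReal.ofReal_ofNat, rpow_two, ENNReal.rpow_two] at h
  have hf2 : AEStronglyMeasurable (fun x => ‖f x‖ ^ 2) μ := hf.norm.pow 2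
  rw [← toReal_eLpNorm hf2, ← toReal_eLpNorm hf, h, ENNReal.toReal_pow]

lemma integral_rpow_half_rpow_inv_eq_lpNorm_sqrt {g : α → ℝ} (hg : AEStronglyMeasurable g μ)
    (hg0 : ∀ x, 0 ≤ g x) {p : ℝ} (hp : 0 < p) :
    (∫ x, g x ^ (p / 2) ∂μ) ^ (1 / p) = lpNorm (fun x => √(g x)) (.ofReal p) μ := by
  rw [lpNorm_eq_integral_norm_rpow_toReal (by simpa) ENNReal.ofReal_ne_top
    (continuous_sqrt.comp_aestronglyMeasurable hg), ENNReal.toReal_ofReal hp.le, one_div]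
  congr 2
  ext x
  rw [norm_of_nonneg (sqrt_nonneg _), sqrt_eq_rpow, ← rpow_mul (hg0 x)]
  ring_nf

lemma integral_sq_eq_lpNorm_sq {g : α → ℝ} (hg : AEStronglyMeasurable g μ) :
    ∫ x, g x ^ 2 ∂μ = lpNorm g 2 μ ^ 2 := by
  have hsq := lpNorm_norm_sq hg 1
  have hg2 : AEStronglyMeasurable (fun x => ‖g x‖ ^ 2) μ := hg.norm.pow 2
  rw [one_mul, lpNorm_one_eq_integral_norm hg2] at hsq
  simpa using hsq

end General

section Bounded

variable {E F : Type*} [NormedAddCommGroup E] [NormedSpace ℝ E] [MeasurableSpace E] [BorelSpace E]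
  [FiniteDimensional ℝ E] [NormedAddCommGroup F] {μ : Measure E}
  [μ.IsAddHaarMeasure] {Ω : Set E}

lemma exists_lpNorm_le_lpNorm (hbdd : IsBounded Ω) {p q : ℝ≥0∞} (hpq : p ≤ q) :
    ∃ K, 0 ≤ K ∧ ∀ f : E → F, Continuous f →
      lpNorm f p (μ.restrict Ω) ≤ K * lpNorm f q (μ.restrict Ω) := by
  have : IsFiniteMeasure (μ.restrict Ω) := ⟨by simpa using hbdd.measure_lt_top⟩
  refine ⟨_, by positivity, fun f hf => (lpNorm_le_lpNorm_mul_rpow_measureReal_univ hpq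
    (memLp_of_isBounded hbdd hf q)).trans_eq (mul_comm _ _)⟩

lemma exists_lpNorm_le_lpNorm_fderiv_add_norm_integral [NormedSpace ℝ F] [CompleteSpace F]
    (hΩ : MeasurableSet Ω) (hconv : Convex ℝ Ω) (hbdd : IsBounded Ω)
    {r q : ℝ} (hr : 1 ≤ r) (hrq : r ≤ q)
    (hdim : Module.finrank ℝ E * (1 / r - 1 / q) < 1 - 1 / q) :
    ∃ C, 0 ≤ C ∧ ∀ f : E → F, ContDiff ℝ 1 f →
      lpNorm f (.ofReal q) (μ.restrict Ω)
        ≤ C * (lpNorm (fderiv ℝ f) (.ofReal r) (μ.restrict Ω) + ‖∫ x in Ω, f x ∂μ‖) := by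
  have := FiniteDimensional.proper ℝ E
  obtain ⟨C, hC, hpoinc⟩ := exists_eLpNorm_sub_setAverage_le (F := F) (μ := μ) hΩ hconv hbdd hr hrq
    hdim
  set V := μ.real Ω
  set D := V⁻¹ * V ^ q⁻¹
  refine ⟨max C.toReal D, by positivity, fun f hf => ?_⟩
  set a := ⨍ x in Ω, f x ∂μ
  have hDf := memLp_of_isBounded (μ := μ) hbdd (hf.continuous_fderiv one_ne_zero) (.ofReal r)
  have hfa : MemLp (fun x => f x - a) (.ofReal q) (μ.restrict Ω) :=
    memLp_of_isBounded hbdd (hf.continuous.sub continuous_const) _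
  have hosc : lpNorm (fun x => f x - a) (.ofReal q) (μ.restrict Ω)
      ≤ C.toReal * lpNorm (fderiv ℝ f) (.ofReal r) (μ.restrict Ω) := by
    rw [← toReal_eLpNorm hfa.aestronglyMeasurable, ← toReal_eLpNorm hDf.aestronglyMeasurable,
      ← ENNReal.toReal_mul]
    exact ENNReal.toReal_mono (ENNReal.mul_ne_top hC hDf.eLpNorm_ne_top) (hpoinc f hf)
  have hmean : lpNorm (fun _ => a) (.ofReal q) (μ.restrict Ω) = D * ‖∫ x in Ω, f x ∂μ‖ := by
    rw [lpNorm_const' (by simp; linarith) ENNReal.ofReal_ne_top,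
      ENNReal.toReal_ofReal (by linarith), show a = V⁻¹ • ∫ x in Ω, f x ∂μ from setAverage_eq ..,
      norm_smul, norm_inv, norm_of_nonneg measureReal_nonneg, measureReal_restrict_apply_univ]
    ring
  calc lpNorm f (.ofReal q) (μ.restrict Ω)
      = lpNorm ((fun x => f x - a) + fun _ => a) (.ofReal q) (μ.restrict Ω) := by
        congr 1
        ext x
        simp
    _ ≤ lpNorm (fun x => f x - a) (.ofReal q) (μ.restrict Ω)
          + lpNorm (fun _ => a) (.ofReal q) (μ.restrict Ω) :=
        lpNorm_add_le hfa (by simp; linarith)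
    _ ≤ max C.toReal D * lpNorm (fderiv ℝ f) (.ofReal r) (μ.restrict Ω)
          + max C.toReal D * ‖∫ x in Ω, f x ∂μ‖ := by
        rw [hmean]
        refine add_le_add (hosc.trans ?_) ?_ <;> gcongr
        exacts [lpNorm_nonneg, le_max_left .., le_max_right ..]
    _ = _ := by ring

end Bounded

section Plane

variable {w : V2 → V2} {x : V2}

lemma sqrt_nsq_le (a : V2) : √(nsq a) ≤ 2 * ‖a‖ := by
  have h : ∀ i, a i ^ 2 ≤ ‖a‖ ^ 2 := fun i => sq_le_sq' (neg_le_of_abs_le (norm_le_pi_norm a i))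
    (le_of_abs_le (norm_le_pi_norm a i))
  rw [sqrt_le_left (by positivity), nsq, Fin.sum_univ_two]
  nlinarith [h 0, h 1]

lemma abs_fderiv_apply_single_le (w : V2 → V2) (x : V2) (i j : Fin 2) :
    |fderiv ℝ w x (Pi.single j 1) i| ≤ ‖fderiv ℝ w x‖ :=
  (norm_le_pi_norm _ i).trans ((fderiv ℝ w x).unit_le_opNorm _ (by simp [Pi.norm_single]))

lemma abs_div2_le (hw : DifferentiableAt ℝ w x) : |div2 w x| ≤ 2 * ‖fderiv ℝ w x‖ := by
  rw [div2_eq_sum_fderiv hw, Fin.sum_univ_two, two_mul]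
  exact (abs_add_le _ _).trans
    (add_le_add (abs_fderiv_apply_single_le w x 0 0) (abs_fderiv_apply_single_le w x 1 1))

lemma abs_curl2_le (hw : DifferentiableAt ℝ w x) : |curl2 w x| ≤ 2 * ‖fderiv ℝ w x‖ := by
  rw [curl2_eq_fderiv hw, two_mul]
  exact (abs_sub _ _).trans
    (add_le_add (abs_fderiv_apply_single_le w x 1 0) (abs_fderiv_apply_single_le w x 0 1))

lemma sqrt_gnsq_le (hw : DifferentiableAt ℝ w x) : √(gnsq w x) ≤ 2 * ‖fderiv ℝ w x‖ := by
  have h : ∀ i j, fderiv ℝ w x (Pi.single j 1) i ^ 2 ≤ ‖fderiv ℝ w x‖ ^ 2 := fun i j =>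
    sq_le_sq' (neg_le_of_abs_le (abs_fderiv_apply_single_le w x i j))
      (le_of_abs_le (abs_fderiv_apply_single_le w x i j))
  rw [sqrt_le_left (by positivity), gnsq_eq_sum_fderiv hw]
  simp only [Fin.sum_univ_two]
  linarith [h 0 0, h 0 1, h 1 0, h 1 1]

lemma gnsq_nonneg (w : V2 → V2) (x : V2) : 0 ≤ gnsq w x :=
  Finset.sum_nonneg fun _ _ => Finset.sum_nonneg fun _ _ => sq_nonneg _

lemma norm_fderiv_le (hw : DifferentiableAt ℝ w x) : ‖fderiv ℝ w x‖ ≤ 2 * √(gnsq w x) := by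
  have hentry : ∀ i j, |fderiv ℝ w x (Pi.single j 1) i| ≤ √(gnsq w x) := fun i j => by
    rw [← sqrt_sq_eq_abs, gnsq_eq_sum_fderiv hw]
    refine sqrt_le_sqrt ((Finset.single_le_sum
      (f := fun j => fderiv ℝ w x (Pi.single j 1) i ^ 2) (fun _ _ => sq_nonneg _)
      (Finset.mem_univ j)).trans
      (Finset.single_le_sum (f := fun i => ∑ j, fderiv ℝ w x (Pi.single j 1) i ^ 2)
        (fun _ _ => Finset.sum_nonneg fun _ _ => sq_nonneg _) (Finset.mem_univ i)))
  refine ContinuousLinearMap.opNorm_le_bound _ (by positivity) fun v =>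
    (pi_norm_le_iff_of_nonneg (by positivity)).2 fun i => ?_
  calc ‖fderiv ℝ w x v i‖ = |∑ j, v j * fderiv ℝ w x (Pi.single j 1) i| := by
        conv_lhs => rw [pi_eq_sum_univ' v, map_sum]
        simp
    _ ≤ ∑ j, |v j * fderiv ℝ w x (Pi.single j 1) i| := Finset.abs_sum_le_sum_abs _ _
    _ ≤ ∑ _j : Fin 2, ‖v‖ * √(gnsq w x) := by
        refine Finset.sum_le_sum fun j _ => ?_
        rw [abs_mul]
        gcongr
        exacts [norm_le_pi_norm v j, hentry i j]
    _ = 2 * √(gnsq w x) * ‖v‖ := by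
        rw [Finset.sum_const, Finset.card_univ, Fintype.card_fin, nsmul_eq_mul]
        push_cast
        ring

end Plane

end LpNorm

section BoundaryCorrection

open scoped ContDiff

set_option maxSynthPendingDepth 3

section QuadraticField

variable {E F G : Type*} [NormedAddCommGroup E] [NormedSpace ℝ E] [NormedAddCommGroup F]
  [NormedSpace ℝ F] [NormedAddCommGroup G] [NormedSpace ℝ G] {A : E → F →L[ℝ] F →L[ℝ] G}
  {u : E → F} {x : E} {a b : ℝ}

lemma norm_fderiv_apply_apply_self_le (hA : DifferentiableAt ℝ A x) (hu : DifferentiableAt ℝ u x)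
    (ha : ‖A x‖ ≤ a) (hb : ‖fderiv ℝ A x‖ ≤ b) :
    ‖fderiv ℝ (fun y => A y (u y) (u y)) x‖ ≤ (a + b) * (‖u x‖ ^ 2 + ‖fderiv ℝ u x‖ ^ 2) := by
  have ha0 := (norm_nonneg _).trans ha
  have hb0 := (norm_nonneg _).trans hb
  have hderiv : ∀ v, fderiv ℝ (fun y => A y (u y) (u y)) x v = fderiv ℝ A x v (u x) (u x)
      + A x (fderiv ℝ u x v) (u x) + A x (u x) (fderiv ℝ u x v) := fun v => by
    rw [((hA.hasFDerivAt.clm_apply hu.hasFDerivAt).clm_apply hu.hasFDerivAt).fderiv]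
    simp only [add_apply, ContinuousLinearMap.flip_apply, ContinuousLinearMap.comp_apply]
    abel
  have hAx : ∀ y z, ‖A x y z‖ ≤ a * ‖y‖ * ‖z‖ := fun y z =>
    ((A x).le_opNorm₂ y z).trans (by gcongr)
  refine ContinuousLinearMap.opNorm_le_bound _ (by positivity) fun v => ?_
  have hDu := (fderiv ℝ u x).le_opNorm v
  rw [hderiv]
  calc _ ≤ b * ‖v‖ * ‖u x‖ * ‖u x‖ + a * (‖fderiv ℝ u x‖ * ‖v‖) * ‖u x‖
        + a * ‖u x‖ * (‖fderiv ℝ u x‖ * ‖v‖) := by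
        refine norm_add₃_le.trans (add_le_add_three ?_ ?_ ?_)
        · exact ((fderiv ℝ A x v).le_opNorm₂ _ _).trans
            (by gcongr; exact ((fderiv ℝ A x).le_opNorm v).trans (by gcongr))
        · exact (hAx _ _).trans (by gcongr)
        · exact (hAx _ _).trans (by gcongr)
    _ ≤ (a + b) * (‖u x‖ ^ 2 + ‖fderiv ℝ u x‖ ^ 2) * ‖v‖ := by
        nlinarith [mul_nonneg (mul_nonneg ha0 (norm_nonneg v)) (sq_nonneg (‖u x‖ - ‖fderiv ℝ u x‖)),
          mul_nonneg (mul_nonneg hb0 (norm_nonneg v)) (sq_nonneg ‖fderiv ℝ u x‖)]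

lemma exists_norm_apply_apply_self_le [ProperSpace E] {Ω : Set E} (hΩ : IsBounded Ω)
    (hA : ContDiff ℝ 1 A) : ∃ M, 0 ≤ M ∧ ∀ u : E → F, Differentiable ℝ u → ∀ x ∈ Ω,
      ‖A x (u x) (u x)‖ ≤ M * ‖u x‖ ^ 2 ∧
      ‖fderiv ℝ (fun y => A y (u y) (u y)) x‖ ≤ M * (‖u x‖ ^ 2 + ‖fderiv ℝ u x‖ ^ 2) := by
  obtain ⟨a, ha⟩ := hΩ.isCompact_closure.exists_bound_of_continuousOn hA.continuous.continuousOn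
  obtain ⟨b, hb⟩ := hΩ.isCompact_closure.exists_bound_of_continuousOn
    (hA.continuous_fderiv one_ne_zero).continuousOn
  refine ⟨max (a + b) 0, le_max_right _ _, fun u hu x hx => ?_⟩
  have hax := ha x (subset_closure hx)
  have hbx := hb x (subset_closure hx)
  have hbx0 := (norm_nonneg _).trans hbx
  refine ⟨?_, (norm_fderiv_apply_apply_self_le (hA.differentiable one_ne_zero x) (hu x) hax
    hbx).trans (by gcongr; exact le_max_left _ _)⟩
  calc ‖A x (u x) (u x)‖ ≤ ‖A x‖ * ‖u x‖ * ‖u x‖ := (A x).le_opNorm₂ _ _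
    _ ≤ max (a + b) 0 * ‖u x‖ ^ 2 := by
        rw [sq, ← mul_assoc]
        gcongr
        exact le_max_of_le_left (by linarith)

end QuadraticField

variable {φ : V2 → ℝ} {Ω : Set V2}

namespace IsDefiningFunction

variable (hφ : IsDefiningFunction φ Ω)
include hφ

lemma exists_contDiff_fderiv_apply_eq_one :
    ∃ N : V2 → V2, ContDiff ℝ ∞ N ∧ ∀ x ∈ frontier Ω, fderiv ℝ φ x (N x) = 1 := by
  have hDφ : ContDiff ℝ ∞ (fderiv ℝ φ) := hφ.contDiff.fderiv_right (by simp)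
  have hgrad : ContDiff ℝ ∞ (grad φ) :=
    contDiff_pi.2 fun i => hDφ.clm_apply contDiff_const
  have hpos : ∀ x, 0 < fderiv ℝ φ x (grad φ x) + φ x ^ 2 := fun x => by
    by_cases hx : x ∈ frontier Ω
    · have := fderiv_apply_grad_pos (hφ.fderiv_ne_zero x hx)
      positivity
    · have := (hφ.mem_frontier_iff (x := x)).not.1 hx
      rw [fderiv_apply_grad]
      have : 0 ≤ nsq (grad φ x) := Finset.sum_nonneg fun _ _ => sq_nonneg _
      positivity
  refine ⟨fun x => (fderiv ℝ φ x (grad φ x) + φ x ^ 2)⁻¹ • grad φ x,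
    (((hDφ.clm_apply hgrad).add (hφ.contDiff.pow 2)).inv fun x => (hpos x).ne').smul hgrad,
    fun x hx => ?_⟩
  simp [hφ.mem_frontier_iff.1 hx, (fderiv_apply_grad_pos (hφ.fderiv_ne_zero x hx)).ne']

/-- The corrector `H = -D²φ(u, u) N`, where `N` is a vector field with `∇φ · N = 1` on the
boundary. -/
lemma exists_quadratic_corrector (hbdd : IsBounded Ω) :
    ∃ M, 0 ≤ M ∧ ∀ u : V2 → V2, ContDiff ℝ 2 u → ∃ H : V2 → V2, ContDiff ℝ 2 H ∧
      HasQuadraticNormalComponent φ Ω u H ∧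
      ∀ x ∈ Ω, ‖H x‖ ≤ M * ‖u x‖ ^ 2 ∧
        ‖fderiv ℝ H x‖ ≤ M * (‖u x‖ ^ 2 + ‖fderiv ℝ u x‖ ^ 2) := by
  obtain ⟨N, hN, hφN⟩ := hφ.exists_contDiff_fderiv_apply_eq_one
  set A : V2 → V2 →L[ℝ] V2 →L[ℝ] V2 := fun x =>
    ((ContinuousLinearMap.smulRightL ℝ V2 V2).flip (-N x)).comp (fderiv ℝ (fderiv ℝ φ) x)
  have hA : ContDiff ℝ ∞ A :=
    (((ContinuousLinearMap.smulRightL ℝ V2 V2).flip.contDiff (n := ∞)).comp hN.neg).clm_comp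
      ((hφ.contDiff.fderiv_right (m := ∞) (by simp)).fderiv_right (by simp))
  obtain ⟨M, hM, hbound⟩ := exists_norm_apply_apply_self_le hbdd (contDiff_infty.1 hA 1)
  refine ⟨M, hM, fun u hu => ⟨fun x => A x (u x) (u x),
    ((contDiff_infty.1 hA 2).clm_apply hu).clm_apply hu, fun x hx => ?_,
    hbound u (hu.differentiable two_ne_zero)⟩⟩
  simp [A, hφN x hx]

end IsDefiningFunction

end BoundaryCorrection

section Estimates

open scoped ENNReal

variable {φ : V2 → ℝ} {w : V2 → V2} {Ω : Set V2} {p : ℝ≥0∞}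

lemma LpS_nonneg (p : ℝ) (Ω : Set V2) (f : V2 → ℝ) : 0 ≤ LpS p Ω f :=
  rpow_nonneg (integral_nonneg fun _ => rpow_nonneg (abs_nonneg _) _) _

lemma LpG_nonneg (p : ℝ) (Ω : Set V2) (w : V2 → V2) : 0 ≤ LpG p Ω w :=
  rpow_nonneg (integral_nonneg fun _ => rpow_nonneg (gnsq_nonneg _ _) _) _

lemma LpS_eq_lpNorm {f : V2 → ℝ} (hf : Continuous f) {p : ℝ} (hp : 0 < p) :
    LpS p Ω f = lpNorm f (.ofReal p) (volume.restrict Ω) := by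
  rw [LpS, lpNorm_eq_integral_norm_rpow_toReal (by simpa) ENNReal.ofReal_ne_top
    hf.aestronglyMeasurable, ENNReal.toReal_ofReal hp.le, one_div]
  rfl

lemma LpG_eq_lpNorm (hw : ContDiff ℝ 1 w) {p : ℝ} (hp : 0 < p) :
    LpG p Ω w = lpNorm (fun x => √(gnsq w x)) (.ofReal p) (volume.restrict Ω) :=
  integral_rpow_half_rpow_inv_eq_lpNorm_sqrt (continuous_gnsq hw).aestronglyMeasurable
    (gnsq_nonneg w) hp

section Bounded

variable (hbdd : IsBounded Ω)
include hbdd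

lemma lpNorm_div2_le (hw : ContDiff ℝ 1 w) (p : ℝ≥0∞) :
    lpNorm (div2 w) p (volume.restrict Ω) ≤ 2 * lpNorm (fderiv ℝ w) p (volume.restrict Ω) :=
  lpNorm_le_mul_lpNorm zero_le_two
    (memLp_of_isBounded hbdd (hw.continuous_fderiv one_ne_zero) p)
    (.of_forall fun x => abs_div2_le (hw.differentiable one_ne_zero x))

lemma lpNorm_curl2_le (hw : ContDiff ℝ 1 w) (p : ℝ≥0∞) :
    lpNorm (curl2 w) p (volume.restrict Ω) ≤ 2 * lpNorm (fderiv ℝ w) p (volume.restrict Ω) :=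
  lpNorm_le_mul_lpNorm zero_le_two
    (memLp_of_isBounded hbdd (hw.continuous_fderiv one_ne_zero) p)
    (.of_forall fun x => abs_curl2_le (hw.differentiable one_ne_zero x))

lemma LpV_le (hw : Continuous w) {p : ℝ} (hp : 0 < p) :
    LpV p Ω w ≤ 2 * lpNorm w (.ofReal p) (volume.restrict Ω) := by
  have hnsq : Continuous fun x => nsq (w x) := by
    unfold nsq
    fun_prop
  rw [LpV, integral_rpow_half_rpow_inv_eq_lpNorm_sqrt hnsq.aestronglyMeasurable
    (fun x => Finset.sum_nonneg fun _ _ => sq_nonneg _) hp]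
  refine lpNorm_le_mul_lpNorm zero_le_two (memLp_of_isBounded hbdd hw _)
    (.of_forall fun x => ?_)
  rw [norm_of_nonneg (sqrt_nonneg _)]
  exact sqrt_nsq_le (w x)

lemma LpG_le (hw : ContDiff ℝ 1 w) {p : ℝ} (hp : 0 < p) :
    LpG p Ω w ≤ 2 * lpNorm (fderiv ℝ w) (.ofReal p) (volume.restrict Ω) := by
  rw [LpG_eq_lpNorm hw hp]
  refine lpNorm_le_mul_lpNorm zero_le_two
    (memLp_of_isBounded hbdd (hw.continuous_fderiv one_ne_zero) _) (.of_forall fun x => ?_)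
  rw [norm_of_nonneg (sqrt_nonneg _)]
  exact sqrt_gnsq_le (hw.differentiable one_ne_zero x)

lemma lpNorm_fderiv_le_LpG (hw : ContDiff ℝ 1 w) {p : ℝ} (hp : 0 < p) :
    lpNorm (fderiv ℝ w) (.ofReal p) (volume.restrict Ω) ≤ 2 * LpG p Ω w := by
  rw [LpG_eq_lpNorm hw hp]
  refine lpNorm_le_mul_lpNorm zero_le_two
    (memLp_of_isBounded hbdd (continuous_gnsq hw).sqrt _) (.of_forall fun x => ?_)
  rw [norm_of_nonneg (sqrt_nonneg _)]
  exact norm_fderiv_le (hw.differentiable one_ne_zero x)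

lemma exists_lpNorm_le_lpNorm_fderiv_two (hΩ : MeasurableSet Ω) (hconv : Convex ℝ Ω)
    (hp : p ≠ ∞) :
    ∃ C, 0 ≤ C ∧ ∀ w : V2 → V2, ContDiff ℝ 1 w → lpNorm w p (volume.restrict Ω)
      ≤ C * (lpNorm (fderiv ℝ w) 2 (volume.restrict Ω) + ‖∫ x in Ω, w x‖) := by
  set q := max p.toReal 2
  have hq : 0 < 1 / q := by positivity
  obtain ⟨C, hC, hsob⟩ := exists_lpNorm_le_lpNorm_fderiv_add_norm_integral (F := V2) (μ := volume)
    hΩ hconv hbdd one_le_two (le_max_right p.toReal 2)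
    (by simp only [Module.finrank_fin_fun]; push_cast; linarith)
  have hpq : p ≤ .ofReal q := (ENNReal.le_ofReal_iff_toReal_le hp (by positivity)).2
    (le_max_left p.toReal 2)
  obtain ⟨K, hK, hmono⟩ := exists_lpNorm_le_lpNorm (F := V2) (μ := volume) hbdd hpq
  refine ⟨K * C, by positivity, fun w hw => (hmono w hw.continuous).trans ?_⟩
  rw [mul_assoc]
  gcongr
  simpa only [ENNReal.ofReal_ofNat] using hsob w hw

section Sub

variable {v H : V2 → V2} (hv : ContDiff ℝ 1 v) (hH : ContDiff ℝ 1 H) (hp : 1 ≤ p)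
include hv hH hp

lemma lpNorm_fderiv_sub_le :
    lpNorm (fderiv ℝ (v - H)) p (volume.restrict Ω)
      ≤ lpNorm (fderiv ℝ v) p (volume.restrict Ω)
        + lpNorm (fderiv ℝ H) p (volume.restrict Ω) := by
  rw [show fderiv ℝ (v - H) = fderiv ℝ v - fderiv ℝ H from funext fun x =>
    fderiv_sub (hv.differentiable one_ne_zero x) (hH.differentiable one_ne_zero x)]
  exact lpNorm_sub_le (memLp_of_isBounded hbdd (hv.continuous_fderiv one_ne_zero) p) hp

lemma lpNorm_div2_sub_le :
    lpNorm (div2 (v - H)) p (volume.restrict Ω)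
      ≤ lpNorm (div2 v) p (volume.restrict Ω)
        + 2 * lpNorm (fderiv ℝ H) p (volume.restrict Ω) := by
  rw [show div2 (v - H) = div2 v - div2 H from funext fun x =>
    div2_sub (hv.differentiable one_ne_zero x) (hH.differentiable one_ne_zero x)]
  exact (lpNorm_sub_le (memLp_of_isBounded hbdd (continuous_div2 hv) p) hp).trans
    (add_le_add_right (lpNorm_div2_le hbdd hH p) _)

lemma lpNorm_curl2_sub_le :
    lpNorm (curl2 (v - H)) p (volume.restrict Ω)
      ≤ lpNorm (curl2 v) p (volume.restrict Ω)
        + 2 * lpNorm (fderiv ℝ H) p (volume.restrict Ω) := by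
  rw [show curl2 (v - H) = curl2 v - curl2 H from funext fun x =>
    curl2_sub (hv.differentiable one_ne_zero x) (hH.differentiable one_ne_zero x)]
  exact (lpNorm_sub_le (memLp_of_isBounded hbdd (continuous_curl2 hv) p) hp).trans
    (add_le_add_right (lpNorm_curl2_le hbdd hH p) _)

end Sub

end Bounded

namespace IsDefiningFunction

variable (hφ : IsDefiningFunction φ Ω) (hbdd : IsBounded Ω)
include hφ hbdd

lemma exists_norm_setIntegral_le_lpNorm_fderiv :
    ∃ R, 0 ≤ R ∧ ∀ w, ContDiff ℝ 1 w → IsTangential φ Ω w →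
      ‖∫ x in Ω, w x‖ ≤ R * lpNorm (fderiv ℝ w) 1 (volume.restrict Ω) := by
  obtain ⟨R, hR, hflux⟩ := hφ.exists_norm_setIntegral_le_integral_abs_div2 hbdd
  refine ⟨R * 2, by positivity, fun w hw htan => ?_⟩
  calc ‖∫ x in Ω, w x‖ ≤ R * lpNorm (div2 w) 1 (volume.restrict Ω) := by
        rw [lpNorm_one_eq_integral_norm (continuous_div2 hw).aestronglyMeasurable]
        exact hflux w hw htan
    _ ≤ R * (2 * lpNorm (fderiv ℝ w) 1 (volume.restrict Ω)) := by
        gcongr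
        exact lpNorm_div2_le hbdd hw 1
    _ = _ := by ring

lemma lpNorm_fderiv_two_le (hconv : Convex ℝ Ω) (hw : ContDiff ℝ 2 w)
    (htan : IsTangential φ Ω w) :
    lpNorm (fderiv ℝ w) 2 (volume.restrict Ω)
      ≤ 2 * (lpNorm (div2 w) 2 (volume.restrict Ω) + lpNorm (curl2 w) 2 (volume.restrict Ω)) := by
  have hw1 : ContDiff ℝ 1 w := hw.of_le one_le_two
  have hdiv := continuous_div2 hw1
  have hcurl := continuous_curl2 hw1
  have hgnsq := continuous_gnsq hw1
  have hsq : LpG 2 Ω w ^ 2 ≤ lpNorm (div2 w) 2 (volume.restrict Ω) ^ 2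
      + lpNorm (curl2 w) 2 (volume.restrict Ω) ^ 2 := by
    rw [LpG_eq_lpNorm hw1 two_pos, ENNReal.ofReal_ofNat,
      ← integral_sq_eq_lpNorm_sq hgnsq.sqrt.aestronglyMeasurable,
      ← integral_sq_eq_lpNorm_sq hdiv.aestronglyMeasurable,
      ← integral_sq_eq_lpNorm_sq hcurl.aestronglyMeasurable, ← integral_add
        (integrableOn_of_isBounded hbdd (by fun_prop))
        (integrableOn_of_isBounded hbdd (by fun_prop))]
    simpa only [sq_sqrt (gnsq_nonneg w _)] using hφ.setIntegral_gnsq_le hbdd hconv hw htan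
  calc lpNorm (fderiv ℝ w) 2 (volume.restrict Ω) ≤ 2 * LpG 2 Ω w := by
        simpa using lpNorm_fderiv_le_LpG hbdd hw1 two_pos
    _ ≤ _ := by
        gcongr
        refine abs_le_of_sq_le_sq' ?_ (add_nonneg lpNorm_nonneg lpNorm_nonneg) |>.2
        nlinarith [mul_nonneg (lpNorm_nonneg (f := div2 w) (p := 2) (μ := volume.restrict Ω))
          (lpNorm_nonneg (f := curl2 w) (p := 2) (μ := volume.restrict Ω))]

lemma exists_lpNorm_le_of_isTangential (hconv : Convex ℝ Ω) (hp : p ≠ ∞) {r : ℝ≥0∞} (hr : 2 ≤ r) :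
    ∃ C, 0 ≤ C ∧ ∀ w, ContDiff ℝ 1 w → IsTangential φ Ω w →
      lpNorm w p (volume.restrict Ω) ≤ C * lpNorm (fderiv ℝ w) r (volume.restrict Ω) := by
  obtain ⟨R, hR, hflux⟩ := hφ.exists_norm_setIntegral_le_lpNorm_fderiv hbdd
  obtain ⟨C, hC, hsob⟩ :=
    exists_lpNorm_le_lpNorm_fderiv_two hbdd hφ.isOpen.measurableSet hconv hp
  obtain ⟨K₁, hK₁, hmono₁⟩ := exists_lpNorm_le_lpNorm (F := V2 →L[ℝ] V2) (μ := volume) hbdd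
    (one_le_two.trans hr)
  obtain ⟨K₂, hK₂, hmono₂⟩ := exists_lpNorm_le_lpNorm (F := V2 →L[ℝ] V2) (μ := volume) hbdd hr
  refine ⟨C * (K₂ + R * K₁), by positivity, fun w hw htan => ?_⟩
  have hDw := hw.continuous_fderiv one_ne_zero
  calc lpNorm w p (volume.restrict Ω)
      ≤ C * (lpNorm (fderiv ℝ w) 2 (volume.restrict Ω)
          + R * lpNorm (fderiv ℝ w) 1 (volume.restrict Ω)) :=
        (hsob w hw).trans (by gcongr; exact hflux w hw htan)
    _ ≤ C * (K₂ * lpNorm (fderiv ℝ w) r (volume.restrict Ω)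
          + R * (K₁ * lpNorm (fderiv ℝ w) r (volume.restrict Ω))) := by
        gcongr
        exacts [hmono₂ _ hDw, hmono₁ _ hDw]
    _ = _ := by ring

lemma exists_corrector_lpNorm_le (hconv : Convex ℝ Ω) {q : ℝ≥0∞} (hq1 : 1 ≤ q) (hq : q ≠ ∞) :
    ∃ C, 0 ≤ C ∧ ∀ u, ContDiff ℝ 2 u → IsTangential φ Ω u → ∃ H : V2 → V2, ContDiff ℝ 2 H ∧
      HasQuadraticNormalComponent φ Ω u H ∧
      lpNorm H q (volume.restrict Ω)
        ≤ C * lpNorm (fderiv ℝ u) (q * 2) (volume.restrict Ω) ^ 2 ∧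
      lpNorm (fderiv ℝ H) q (volume.restrict Ω)
        ≤ C * lpNorm (fderiv ℝ u) (q * 2) (volume.restrict Ω) ^ 2 := by
  obtain ⟨M, hM, hcorr⟩ := hφ.exists_quadratic_corrector hbdd
  obtain ⟨P, -, hpoinc⟩ := hφ.exists_lpNorm_le_of_isTangential hbdd hconv (p := q * 2)
    (ENNReal.mul_ne_top hq ENNReal.ofNat_ne_top) (r := q * 2) (by simpa using mul_le_mul_left hq1 2)
  refine ⟨M * (P ^ 2 + 1), by positivity, fun u hu htan => ?_⟩
  obtain ⟨H, hH, hbdry, hbound⟩ := hcorr u hu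
  have hu1 : ContDiff ℝ 1 u := hu.of_le one_le_two
  have hDu := hu1.continuous_fderiv one_ne_zero
  set d := lpNorm (fderiv ℝ u) (q * 2) (volume.restrict Ω)
  have husq : lpNorm (fun x => ‖u x‖ ^ 2) q (volume.restrict Ω) ≤ P ^ 2 * d ^ 2 := by
    rw [lpNorm_norm_sq hu1.continuous.aestronglyMeasurable, ← mul_pow]
    exact pow_le_pow_left₀ lpNorm_nonneg (hpoinc u hu1 htan) 2
  have hDusq : lpNorm (fun x => ‖fderiv ℝ u x‖ ^ 2) q (volume.restrict Ω) = d ^ 2 :=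
    lpNorm_norm_sq hDu.aestronglyMeasurable q
  have husq_memLp : MemLp (fun x => ‖u x‖ ^ 2) q (volume.restrict Ω) :=
    memLp_of_isBounded hbdd (hu1.continuous.norm.pow 2) q
  have hDusq_memLp : MemLp (fun x => ‖fderiv ℝ u x‖ ^ 2) q (volume.restrict Ω) :=
    memLp_of_isBounded hbdd (hDu.norm.pow 2) q
  refine ⟨H, hH, hbdry, ?_, ?_⟩
  · refine (lpNorm_le_mul_lpNorm hM husq_memLp (ae_restrict_of_forall_mem
      hφ.isOpen.measurableSet fun x hx => (hbound x hx).1.trans ?_)).trans ?_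
    · gcongr
      exact le_norm_self _
    rw [mul_assoc]
    gcongr
    linarith [sq_nonneg d]
  · refine (lpNorm_le_mul_lpNorm hM (husq_memLp.add hDusq_memLp) (ae_restrict_of_forall_mem
      hφ.isOpen.measurableSet fun x hx => (hbound x hx).2.trans ?_)).trans ?_
    · gcongr
      exact le_norm_self _
    rw [mul_assoc]
    gcongr
    linarith [lpNorm_add_le husq_memLp hq1 (g := fun x => ‖fderiv ℝ u x‖ ^ 2)]

section QuadraticNormalComponent

variable (hconv : Convex ℝ Ω)
include hconv

lemma exists_norm_setIntegral_le_of_hasQuadraticNormalComponent :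
    ∃ C, 0 ≤ C ∧ ∀ u v, ContDiff ℝ 2 u → ContDiff ℝ 1 v → IsTangential φ Ω u →
      HasQuadraticNormalComponent φ Ω u v →
      ‖∫ x in Ω, v x‖ ≤ C * (lpNorm (fderiv ℝ v) 2 (volume.restrict Ω)
        + lpNorm (fderiv ℝ u) 2 (volume.restrict Ω) ^ 2) := by
  obtain ⟨R, hR, hflux⟩ := hφ.exists_norm_setIntegral_le_lpNorm_fderiv hbdd
  obtain ⟨A, hA, hcorr⟩ :=
    hφ.exists_corrector_lpNorm_le hbdd hconv (q := 1) le_rfl ENNReal.one_ne_top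
  obtain ⟨K, hK, hmono⟩ := exists_lpNorm_le_lpNorm (F := V2 →L[ℝ] V2) (μ := volume) hbdd
    (p := 1) (q := 2) one_le_two
  refine ⟨R * K + (R + 1) * A, by positivity, fun u v hu hv htan hbdry => ?_⟩
  obtain ⟨H, hH, hHbdry, hHle, hDHle⟩ := hcorr u hu htan
  rw [one_mul] at hHle hDHle
  set d := lpNorm (fderiv ℝ v) 2 (volume.restrict Ω)
  set e := lpNorm (fderiv ℝ u) 2 (volume.restrict Ω)
  have hd : 0 ≤ d := lpNorm_nonneg
  have hH1 : ContDiff ℝ 1 H := hH.of_le one_le_two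
  have hmeanw : ‖∫ x in Ω, (v - H) x‖ ≤ R * (K * d + A * e ^ 2) :=
    calc ‖∫ x in Ω, (v - H) x‖
        ≤ R * lpNorm (fderiv ℝ (v - H)) 1 (volume.restrict Ω) :=
          hflux _ (hv.sub hH1) (hbdry.isTangential_sub hHbdry)
      _ ≤ R * (K * d + A * e ^ 2) := by
          gcongr
          exact (lpNorm_fderiv_sub_le hbdd hv hH1 le_rfl).trans
            (add_le_add (hmono _ (hv.continuous_fderiv one_ne_zero)) hDHle)
  have hmeanH : ‖∫ x in Ω, H x‖ ≤ A * e ^ 2 := by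
    refine (norm_integral_le_integral_norm _).trans ?_
    rwa [← lpNorm_one_eq_integral_norm hH.continuous.aestronglyMeasurable]
  have hsplit : ∫ x in Ω, v x = (∫ x in Ω, (v - H) x) + ∫ x in Ω, H x := by
    rw [← integral_add
      (integrableOn_of_isBounded (f := v - H) hbdd (hv.continuous.sub hH.continuous))
      (integrableOn_of_isBounded hbdd hH.continuous)]
    simp only [Pi.sub_apply, sub_add_cancel]
  calc ‖∫ x in Ω, v x‖ ≤ R * (K * d + A * e ^ 2) + A * e ^ 2 :=
        hsplit ▸ norm_add_le_of_le hmeanw hmeanH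
    _ ≤ (R * K + (R + 1) * A) * (d + e ^ 2) := by
        linarith [mul_nonneg (mul_nonneg (add_nonneg hR zero_le_one) hA) hd,
          mul_nonneg (mul_nonneg hR hK) (sq_nonneg e)]

lemma exists_lpNorm_le_of_hasQuadraticNormalComponent (hp : p ≠ ∞) :
    ∃ C, 0 ≤ C ∧ ∀ u v, ContDiff ℝ 2 u → ContDiff ℝ 1 v → IsTangential φ Ω u →
      HasQuadraticNormalComponent φ Ω u v →
      lpNorm v p (volume.restrict Ω) ≤ C * (lpNorm (fderiv ℝ v) 2 (volume.restrict Ω)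
        + lpNorm (fderiv ℝ u) 2 (volume.restrict Ω) ^ 2) := by
  obtain ⟨S, hS, hsob⟩ :=
    exists_lpNorm_le_lpNorm_fderiv_two hbdd hφ.isOpen.measurableSet hconv hp
  obtain ⟨A, hA, hmean⟩ :=
    hφ.exists_norm_setIntegral_le_of_hasQuadraticNormalComponent hbdd hconv
  refine ⟨S * (1 + A), by positivity, fun u v hu hv htan hbdry => ?_⟩
  set d := lpNorm (fderiv ℝ v) 2 (volume.restrict Ω)
  set e := lpNorm (fderiv ℝ u) 2 (volume.restrict Ω)
  calc lpNorm v p (volume.restrict Ω) ≤ S * (d + A * (d + e ^ 2)) :=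
        (hsob v hv).trans (by gcongr; exact hmean u v hu hv htan hbdry)
    _ ≤ S * ((1 + A) * (d + e ^ 2)) := by
        gcongr
        linarith [sq_nonneg e]
    _ = _ := by ring

lemma exists_lpNorm_fderiv_two_le_of_hasQuadraticNormalComponent :
    ∃ C, 0 ≤ C ∧ ∀ u v, ContDiff ℝ 2 u → ContDiff ℝ 2 v → IsTangential φ Ω u →
      HasQuadraticNormalComponent φ Ω u v →
      lpNorm (fderiv ℝ v) 2 (volume.restrict Ω)
        ≤ C * (lpNorm (div2 v) 2 (volume.restrict Ω) + lpNorm (curl2 v) 2 (volume.restrict Ω)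
          + lpNorm (fderiv ℝ u) 4 (volume.restrict Ω) ^ 2) := by
  obtain ⟨A, hA, hcorr⟩ :=
    hφ.exists_corrector_lpNorm_le hbdd hconv (q := 2) one_le_two ENNReal.ofNat_ne_top
  refine ⟨2 + 9 * A, by positivity, fun u v hu hv htan hbdry => ?_⟩
  obtain ⟨H, hH, hHbdry, -, hDHle⟩ := hcorr u hu htan
  rw [show (2 : ℝ≥0∞) * 2 = 4 by norm_num] at hDHle
  have hv1 : ContDiff ℝ 1 v := hv.of_le one_le_two
  have hH1 : ContDiff ℝ 1 H := hH.of_le one_le_two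
  have hw : IsTangential φ Ω (v - H) :=
    hbdry.isTangential_sub hHbdry
  have hDv : lpNorm (fderiv ℝ v) 2 (volume.restrict Ω)
      ≤ lpNorm (fderiv ℝ (v - H)) 2 (volume.restrict Ω)
        + lpNorm (fderiv ℝ H) 2 (volume.restrict Ω) := by
    have h := lpNorm_fderiv_sub_le hbdd (v := v - H) (H := -H) (hv1.sub hH1) hH1.neg
      (p := 2) one_le_two
    rwa [sub_neg_eq_add, sub_add_cancel, show fderiv ℝ (-H) = -fderiv ℝ H from
      funext fun x => fderiv_neg, lpNorm_neg] at h
  have hDw := hφ.lpNorm_fderiv_two_le hbdd hconv (w := v - H) (hv.sub hH) hw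
  have hdiv := lpNorm_div2_sub_le hbdd hv1 hH1 (p := 2) one_le_two
  have hcurl := lpNorm_curl2_sub_le hbdd hv1 hH1 (p := 2) one_le_two
  have hAnonneg := mul_nonneg hA (add_nonneg
    (lpNorm_nonneg (f := div2 v) (p := 2) (μ := volume.restrict Ω))
    (lpNorm_nonneg (f := curl2 v) (p := 2) (μ := volume.restrict Ω)))
  linarith [sq_nonneg (lpNorm (fderiv ℝ u) 4 (volume.restrict Ω))]

lemma exists_LpV_le_of_hasQuadraticNormalComponent {p : ℝ} (hp : 0 < p) :
    ∃ C, 0 ≤ C ∧ ∀ u v, ContDiff ℝ 2 u → ContDiff ℝ 1 v → IsTangential φ Ω u →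
      HasQuadraticNormalComponent φ Ω u v →
      LpV p Ω v ≤ C * (LpG 2 Ω v + LpG 2 Ω u ^ 2) := by
  obtain ⟨C, hC, hle⟩ :=
    hφ.exists_lpNorm_le_of_hasQuadraticNormalComponent hbdd hconv (p := .ofReal p)
      ENNReal.ofReal_ne_top
  refine ⟨8 * C, by positivity, fun u v hu hv htan hbdry => ?_⟩
  have hDv := lpNorm_fderiv_le_LpG hbdd hv two_pos
  have hDu := lpNorm_fderiv_le_LpG hbdd (hu.of_le one_le_two) two_pos
  rw [ENNReal.ofReal_ofNat] at hDv hDu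
  calc LpV p Ω v ≤ 2 * lpNorm v (.ofReal p) (volume.restrict Ω) := LpV_le hbdd hv.continuous hp
    _ ≤ 2 * (C * (2 * LpG 2 Ω v + (2 * LpG 2 Ω u) ^ 2)) := by
        gcongr
        refine (hle u v hu hv htan hbdry).trans ?_
        gcongr
        exact lpNorm_nonneg
    _ ≤ 8 * C * (LpG 2 Ω v + LpG 2 Ω u ^ 2) := by linarith [mul_nonneg hC (LpG_nonneg 2 Ω v)]

lemma exists_LpG_two_le_of_hasQuadraticNormalComponent :
    ∃ C, 0 ≤ C ∧ ∀ u v, ContDiff ℝ 2 u → ContDiff ℝ 2 v → IsTangential φ Ω u →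
      HasQuadraticNormalComponent φ Ω u v →
      LpG 2 Ω v ≤ C * (LpS 2 Ω (div2 v) + LpS 2 Ω (curl2 v) + LpG 4 Ω u ^ 2) := by
  obtain ⟨C, hC, hle⟩ := hφ.exists_lpNorm_fderiv_two_le_of_hasQuadraticNormalComponent hbdd hconv
  refine ⟨8 * C, by positivity, fun u v hu hv htan hbdry => ?_⟩
  have hv1 : ContDiff ℝ 1 v := hv.of_le one_le_two
  have hDu := lpNorm_fderiv_le_LpG hbdd (hu.of_le one_le_two) four_pos
  have hDv := LpG_le hbdd hv1 two_pos
  rw [LpS_eq_lpNorm (continuous_div2 hv1) two_pos, LpS_eq_lpNorm (continuous_curl2 hv1) two_pos]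
  rw [ENNReal.ofReal_ofNat] at hDu hDv ⊢
  calc LpG 2 Ω v ≤ 2 * lpNorm (fderiv ℝ v) 2 (volume.restrict Ω) := hDv
    _ ≤ 2 * (C * (lpNorm (div2 v) 2 (volume.restrict Ω) + lpNorm (curl2 v) 2 (volume.restrict Ω)
          + (2 * LpG 4 Ω u) ^ 2)) := by
        gcongr
        refine (hle u v hu hv htan hbdry).trans ?_
        gcongr
        exact lpNorm_nonneg
    _ ≤ _ := by
        linarith [mul_nonneg hC (lpNorm_nonneg (f := div2 v) (p := 2) (μ := volume.restrict Ω)),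
          mul_nonneg hC (lpNorm_nonneg (f := curl2 v) (p := 2) (μ := volume.restrict Ω))]

end QuadraticNormalComponent

end IsDefiningFunction

end Estimates

section MaterialDerivative

open scoped ContDiff

variable {u : ℝ → V2 → V2} {Ω : Set V2} {n : V2 → V2}

namespace Smooth2V

variable (hu : Smooth2V u) (t : ℝ)
include hu

lemma contDiff_uncurry : ContDiff ℝ ∞ fun z : ℝ × V2 => u z.1 z.2 := contDiff_pi.2 hu

lemma contDiff_slice : ContDiff ℝ ∞ (u t) :=
  hu.contDiff_uncurry.comp (contDiff_prodMk_right t)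

lemma hasDerivAt (x : V2) :
    HasDerivAt (fun s => u s x) (fderiv ℝ (fun z : ℝ × V2 => u z.1 z.2) (t, x) (1, 0)) t :=
  HasFDerivAt.comp_hasDerivAt (l := fun z : ℝ × V2 => u z.1 z.2) (f := fun s => (s, x)) t
    (hu.contDiff_uncurry.differentiable (by simp) (t, x)).hasFDerivAt
    ((hasDerivAt_id t).prodMk (hasDerivAt_const t x))

lemma matD_eq (x : V2) :
    matD u t x = fderiv ℝ (fun z : ℝ × V2 => u z.1 z.2) (t, x) (1, 0)
      + fderiv ℝ (u t) x (u t x) := by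
  have hslice := (hu.contDiff_slice t).differentiable (by simp) x
  ext i
  rw [Pi.add_apply, matD, dt, (hasDerivAt_pi.1 (hu.hasDerivAt t x) i).deriv,
    ← fderiv_apply_eq_dot_grad, fderiv_apply hslice]
  rfl

lemma contDiff_matD : ContDiff ℝ ∞ (matD u t) := by
  have hut := hu.contDiff_slice t
  rw [funext (hu.matD_eq t)]
  exact (((hu.contDiff_uncurry.fderiv_right (m := ∞) le_rfl).clm_apply contDiff_const).comp
    (contDiff_prodMk_right t)).add ((hut.fderiv_right (m := ∞) le_rfl).clm_apply hut)

end Smooth2V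

lemma SmoothDomain.exists_isDefiningFunction (hΩ : SmoothDomain Ω n) :
    ∃ φ, IsDefiningFunction φ Ω ∧
      ∀ w, (∀ x ∈ frontier Ω, dot (w x) (n x) = 0) → IsTangential φ Ω w := by
  obtain ⟨φ, hφ, hsub, hfr, hgrad, hn⟩ := hΩ.defining
  refine ⟨φ, ⟨hφ, hsub, hfr, fun x hx h0 => hgrad x hx ?_⟩, fun w hw x hx => ?_⟩
  · ext i
    simp [grad, pd, h0]
  · have hlen : √(nsq (grad φ x)) ≠ 0 := (sqrt_pos.2 (nsq_pos (hgrad x hx))).ne'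
    have hdot : (√(nsq (grad φ x)))⁻¹ * dot (w x) (grad φ x) = 0 := by
      simpa [hn x hx, dot, mul_add, mul_left_comm] using hw x hx
    rw [fderiv_apply_eq_dot_grad]
    exact (mul_eq_zero.1 hdot).resolve_left (inv_ne_zero hlen)

end MaterialDerivative

theorem stmt_12_general (Ω : Set V2) (n : V2 → V2) (hΩ : SmoothDomain Ω n) (hconv : Convex ℝ Ω)
    (p : ℝ) (hp : 0 < p) :
    ∃ C > (0 : ℝ), ∀ (I : Set ℝ) (u : ℝ → V2 → V2), UniqueDiffOn ℝ I → Smooth2V u →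
      (∀ t ∈ I, ∀ x ∈ frontier Ω, dot (u t x) (n x) = 0) → ∀ t ∈ I,
        (LpV p Ω (matD u t) ≤ C * (LpG 2 Ω (matD u t) + (LpG 2 Ω (u t)) ^ 2)) ∧
        (LpG 2 Ω (matD u t)
          ≤ C * (LpS 2 Ω (div2 (matD u t)) + LpS 2 Ω (curl2 (matD u t))
              + (LpG 4 Ω (u t)) ^ 2)) := by
  obtain ⟨φ, hφ, htan⟩ := hΩ.exists_isDefiningFunction
  obtain ⟨C₁, hC₁, hLpV⟩ := hφ.exists_LpV_le_of_hasQuadraticNormalComponent hΩ.bounded hconv hp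
  obtain ⟨C₂, hC₂, hLpG⟩ := hφ.exists_LpG_two_le_of_hasQuadraticNormalComponent hΩ.bounded hconv
  refine ⟨C₁ + C₂ + 1, by positivity, fun I u hI hu hslip t ht => ?_⟩
  have hu2 : ContDiff ℝ 2 (u t) := contDiff_infty.1 (hu.contDiff_slice t) 2
  have hv2 : ContDiff ℝ 2 (matD u t) := contDiff_infty.1 (hu.contDiff_matD t) 2
  have hutan : ∀ s ∈ I, IsTangential φ Ω (u s) := fun s hs => htan (u s) (hslip s hs)
  have hbdry : HasQuadraticNormalComponent φ Ω (u t) (matD u t) := fun x hx => by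
    rw [hu.matD_eq t x]
    exact hφ.fderiv_apply_materialDerivative hI hutan ht (hu2.of_le one_le_two) hx
      (hu.hasDerivAt t x)
  refine ⟨(hLpV _ _ hu2 (hv2.of_le one_le_two) (hutan t ht) hbdry).trans ?_,
    (hLpG _ _ hu2 hv2 (hutan t ht) hbdry).trans ?_⟩
  · have := LpG_nonneg 2 Ω (matD u t)
    gcongr
    linarith
  · have := LpS_nonneg 2 Ω (div2 (matD u t))
    have := LpS_nonneg 2 Ω (curl2 (matD u t))
    gcongr
    linarith

/-- Lemma 2.8: estimates for the material derivative.
For smooth solutions of compressible MHD with Navier-slip boundary conditions and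
`p ∈ [1,∞)`, with `C = C(p, Ω)`:
(i) `‖u̇‖_{L^p} ≤ C(‖∇u̇‖_{L²} + ‖∇u‖²_{L²})`;
(ii) `‖∇u̇‖_{L²} ≤ C(‖div u̇‖_{L²} + ‖curl u̇‖_{L²} + ‖∇u‖²_{L⁴})`. -/
theorem stmt_12
    (Ω : Set V2) (n : V2 → V2) (hΩ : SmoothDomain Ω n) (hconv : Convex ℝ Ω)
    (p : ℝ) (hp1 : 1 ≤ p) :
    ∃ C > (0:ℝ), ∀ (a γ μ lam ν T : ℝ) (ρ : ℝ → V2 → ℝ) (u B : ℝ → V2 → V2),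
      0 < a → 1 < γ → 0 < μ → 0 ≤ μ + lam → 0 < ν → 0 < T →
      Smooth2 ρ → Smooth2V u → Smooth2V B →
      IsMHDSol Ω n a γ μ lam ν (Ioc 0 T) ρ u B →
      ∀ t ∈ Ioc 0 T,
        (LpV p Ω (matD u t) ≤ C * (LpG 2 Ω (matD u t) + (LpG 2 Ω (u t)) ^ 2)) ∧
        (LpG 2 Ω (matD u t)
          ≤ C * (LpS 2 Ω (div2 (matD u t)) + LpS 2 Ω (curl2 (matD u t))
              + (LpG 4 Ω (u t)) ^ 2)) := by
  obtain ⟨C, hC, hest⟩ := stmt_12_general Ω n hΩ hconv p (zero_lt_one.trans_le hp1)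
  exact ⟨C, hC, fun _ _ _ _ _ T _ u _ _ _ _ _ _ _ _ hu _ hsol => hest (Ioc 0 T) u
    (uniqueDiffOn_Ioc 0 T) hu fun t ht x hx => (hsol.slipU t ht x hx).1⟩

end MHD
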